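/- arXiv:1108.1878 — 2 statements merged into one kernel-verified Lean document; each statement's English description precedes it below -/
import Mathlib

section
/- Let −|a| < α < β < |a| with 0 ∈ [α, β], and let δ satisfy 1/6 < δ < 1/2. For each positive integer n, let y₀ < y₁ < ... < y_{s_n} enumerate the integers y with y + n even and nα ≤ y ≤ nβ. Then there exists a constant C > 0 such that |Σ_{j=0}^{k} e^{i n θ(y_j/n)}| ≤ C n^{1/2 + δ} for all n and all k with 0 ≤ k ≤ s_n. -/
open Filter Topology Asymptotics MeasureTheory

noncomputable section

/-- One step of the (column-decomposition) quantum walk `U` on functions `ℤ → ℂ²`: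
`(Uf)(x) = P f(x+1) + Q f(x-1)` with `P = [[a,0],[-conj b,0]]`, `Q = [[0,b],[0,conj a]]`. -/
def qwStep (a b : ℂ) (f : ℤ → ℂ × ℂ) : ℤ → ℂ × ℂ := fun x =>
  (a * (f (x + 1)).1 + b * (f (x - 1)).2,
   -(starRingEnd ℂ) b * (f (x + 1)).1 + (starRingEnd ℂ) a * (f (x - 1)).2)

/-- `δ₀ ⊗ φ : ℤ → ℂ²`. -/
def qwDelta (φ : ℂ × ℂ) : ℤ → ℂ × ℂ := fun x => if x = 0 then φ else 0

/-- Squared norm of a vector in `ℂ²`. -/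
def nsq (u : ℂ × ℂ) : ℝ := ‖u.1‖ ^ 2 + ‖u.2‖ ^ 2

/-- Transition probability `p_n(φ; y) = ‖(Uⁿ(δ₀ ⊗ φ))(y)‖²`. -/
def qwP (a b : ℂ) (φ : ℂ × ℂ) (n : ℕ) (y : ℤ) : ℝ :=
  nsq (((qwStep a b)^[n] (qwDelta φ)) y)

/-- `λ_A(φ) = |φ₂|² − |φ₁|² + (1/|a|²)(ab conj(φ₁)φ₂ + conj(ab) φ₁ conj(φ₂))` (a real number). -/
def lamA (a b : ℂ) (φ : ℂ × ℂ) : ℝ :=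
  ‖φ.2‖ ^ 2 - ‖φ.1‖ ^ 2 +
    (a * b * (starRingEnd ℂ) φ.1 * φ.2 +
      (starRingEnd ℂ) a * (starRingEnd ℂ) b * φ.1 * (starRingEnd ℂ) φ.2).re / ‖a‖ ^ 2

/-- `μ(t) = arccos(|a| cos t)`. -/
def muF (a : ℂ) (t : ℝ) : ℝ := Real.arccos (‖a‖ * Real.cos t)

/-- `t(η) = arcsin(|b|η/(|a|√(1 − η²)))`. -/
def tF (a b : ℂ) (η : ℝ) : ℝ := Real.arcsin (‖b‖ * η / (‖a‖ * Real.sqrt (1 - η ^ 2)))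

/-- `θ(η) = 2μ(t(η)) − 2η t(η)`. -/
def thetaF (a b : ℂ) (η : ℝ) : ℝ := 2 * muF a (tF a b η) - 2 * η * tF a b η

/-- The set of integers `y` with `y + n` even and `nα ≤ y ≤ nβ`
(for `n ≥ 1`, `nα ≤ y ↔ ⌈nα⌉ ≤ y` and `y ≤ nβ ↔ y ≤ ⌊nβ⌋`). These are exactly the points
`y₀ < y₁ < ⋯ < y_{s_n}` of the paper; a partial sum `∑_{j=0}^{k}` over the enumeration is the
same as a sum over the elements `≤ m` for a cutoff `m = y_k`. -/
def Tset (α β : ℝ) (n : ℕ) : Finset ℤ :=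
  (Finset.Icc ⌈(n : ℝ) * α⌉ ⌊(n : ℝ) * β⌋).filter fun y => Even ((n : ℤ) + y)

/-!
Since `μ'(t(η)) = η`, the terms containing `t'` cancel in `θ'`, and `θ' = -2t`. Consecutive points
`y` differ by `2`, so by the mean value theorem the increments of `nθ(y/n)` are `-4t(ξ)`, with `ξ`
between consecutive `y/n`. The function `t` is odd and increasing, with `t(η) ≥ |b|η` for `η ≥ 0`
and `|t| < π/2`, so these increments are decreasing and approach `2πℤ` only near `η = 0`: for
`|y| ≥ √n` their distance to `2πℤ` is at least a constant times `1/√n`. The Kuzmin–Landau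
inequality bounds the sums over `y ≥ √n` and over `y ≤ -√n` by `O(√n)`, and the remaining `O(√n)`
terms are estimated trivially. So the sums are in fact `O(√n)`.
-/

open scoped Real

/-! ### The Kuzmin–Landau inequality -/

lemma sum_range_succ_mul_sub_succ {R : Type*} [Ring R] (w z : ℕ → R) (N : ℕ) :
    ∑ j ∈ Finset.range (N + 1), w j * (z (j + 1) - z j) =
      w N * z (N + 1) - w 0 * z 0 - ∑ j ∈ Finset.range N, (w (j + 1) - w j) * z (j + 1) := by
  induction N with
  | zero => simp [mul_sub]
  | succ N ih =>
    rw [Finset.sum_range_succ, ih, Finset.sum_range_succ _ N]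
    noncomm_ring

lemma norm_sum_range_succ_mul_sub_le {R : Type*} [SeminormedRing R] (w : ℕ → R) {z : ℕ → R}
    (hz : ∀ j, ‖z j‖ ≤ 1) (N : ℕ) :
    ‖∑ j ∈ Finset.range (N + 1), w j * (z (j + 1) - z j)‖ ≤
      ‖w N‖ + ‖w 0‖ + ∑ j ∈ Finset.range N, ‖w (j + 1) - w j‖ := by
  have hmul (u : R) (j : ℕ) : ‖u * z j‖ ≤ ‖u‖ :=
    (norm_mul_le u (z j)).trans (mul_le_of_le_one_right (norm_nonneg u) (hz j))
  rw [sum_range_succ_mul_sub_succ]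
  calc _ ≤ ‖w N * z (N + 1)‖ + ‖w 0 * z 0‖ +
        ‖∑ j ∈ Finset.range N, (w (j + 1) - w j) * z (j + 1)‖ :=
        (norm_sub_le _ _).trans (by gcongr; exact norm_sub_le _ _)
    _ ≤ _ := by
        gcongr
        · exact hmul _ _
        · exact hmul _ _
        · exact norm_sum_le_of_le _ fun j _ => hmul _ _

lemma div_pi_le_sin_half {x l : ℝ} (hl : 0 ≤ l) (hx : x ∈ Set.Icc l (2 * π - l)) :
    l / π ≤ Real.sin (x / 2) := by
  have le_sin {y : ℝ} (hy : l ≤ y) (hy' : y ≤ π) : l / π ≤ Real.sin (y / 2) :=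
    calc l / π ≤ y / π := by gcongr
      _ = 2 / π * (y / 2) := by ring
      _ ≤ Real.sin (y / 2) := Real.mul_le_sin (by linarith) (by linarith)
  rcases le_total x π with h | h
  · exact le_sin hx.1 h
  · have := le_sin (y := 2 * π - x) (by linarith [hx.2]) (by linarith)
    rwa [sub_div, mul_div_cancel_left₀ _ two_ne_zero, Real.sin_pi_sub] at this

lemma antitoneOn_cot : AntitoneOn Real.cot (Set.Ioo 0 π) := by
  intro x hx y hy hxy
  have hsin : 0 ≤ Real.sin (y - x) :=
    Real.sin_nonneg_of_nonneg_of_le_pi (by linarith) (by linarith [hx.1, hy.2])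
  rw [Real.sin_sub] at hsin
  rw [Real.cot_eq_cos_div_sin, Real.cot_eq_cos_div_sin,
    div_le_div_iff₀ (Real.sin_pos_of_mem_Ioo hy) (Real.sin_pos_of_mem_Ioo hx)]
  linarith

lemma inv_exp_I_mul_sub_one {z : ℂ} (hz : Complex.exp (Complex.I * z) ≠ 1) :
    (Complex.exp (Complex.I * z) - 1)⁻¹ = -(1 / 2) - Complex.I / 2 * Complex.cot (z / 2) := by
  have h1 : Complex.exp (Complex.I * z) - 1 ≠ 0 := sub_ne_zero.2 hz
  have h2 : 1 - Complex.exp (Complex.I * z) ≠ 0 := sub_ne_zero.2 hz.symm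
  rw [Complex.cot_eq_exp_ratio, show 2 * Complex.I * (z / 2) = Complex.I * z by ring]
  have := Complex.I_ne_zero
  field_simp
  ring

/-- The summation weight of the Kuzmin–Landau inequality: a geometric step `z ↦ exp (i x) z`
satisfies `z = klWeight x * (exp (i x) z - z)`. -/
def klWeight (x : ℝ) : ℂ := (Complex.exp (Complex.I * x) - 1)⁻¹

lemma exp_I_mul_ne_one {x : ℝ} (h0 : 0 < x) (h2 : x < 2 * π) : Complex.exp (Complex.I * x) ≠ 1 := by
  rw [← sub_ne_zero, ← norm_ne_zero_iff, Complex.norm_exp_I_mul_ofReal_sub_one, norm_ne_zero_iff]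
  exact mul_ne_zero two_ne_zero (Real.sin_pos_of_pos_of_lt_pi (by linarith) (by linarith)).ne'

lemma klWeight_mul_sub {x : ℝ} (h0 : 0 < x) (h2 : x < 2 * π) (z : ℂ) :
    klWeight x * (Complex.exp (Complex.I * x) * z - z) = z := by
  rw [← sub_one_mul, klWeight, inv_mul_cancel_left₀ (sub_ne_zero.2 (exp_I_mul_ne_one h0 h2))]

lemma norm_klWeight_le {x l : ℝ} (hl : 0 < l) (hx : x ∈ Set.Icc l (2 * π - l)) :
    ‖klWeight x‖ ≤ π / l / 2 :=
  calc ‖klWeight x‖ = ‖2 * Real.sin (x / 2)‖⁻¹ := by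
        rw [klWeight, norm_inv, Complex.norm_exp_I_mul_ofReal_sub_one]
    _ ≤ (2 * (l / π))⁻¹ := by
        refine inv_anti₀ (by positivity) (le_trans ?_ (le_abs_self _))
        gcongr
        exact div_pi_le_sin_half hl.le hx
    _ = π / l / 2 := by field_simp

lemma norm_klWeight_sub {x y : ℝ} (hx : 0 < x) (hxy : x ≤ y) (hy : y < 2 * π) :
    ‖klWeight x - klWeight y‖ = (Real.cot (x / 2) - Real.cot (y / 2)) / 2 := by
  have hcot : Real.cot (y / 2) ≤ Real.cot (x / 2) :=
    antitoneOn_cot ⟨by linarith, by linarith⟩ ⟨by linarith, by linarith⟩ (by linarith)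
  have hsub : klWeight x - klWeight y =
      -Complex.I * ((Real.cot (x / 2) - Real.cot (y / 2)) / 2 : ℝ) := by
    rw [klWeight, klWeight, inv_exp_I_mul_sub_one (exp_I_mul_ne_one hx (by linarith)),
      inv_exp_I_mul_sub_one (exp_I_mul_ne_one (by linarith) hy)]
    push_cast
    ring
  rw [hsub, norm_mul, norm_neg, Complex.norm_I, one_mul, Complex.norm_of_nonneg (by linarith)]

lemma sum_norm_klWeight_sub_le {d : ℕ → ℝ} {N : ℕ} {l : ℝ} (hl : 0 < l)
    (hmem : ∀ j ≤ N, d j ∈ Set.Icc l (2 * π - l)) (hanti : ∀ j < N, d (j + 1) ≤ d j) :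
    ∑ j ∈ Finset.range N, ‖klWeight (d (j + 1)) - klWeight (d j)‖ ≤ π / l := by
  have norm_sub {i j : ℕ} (hi : i ≤ N) (hj : j ≤ N) (h : d j ≤ d i) :
      ‖klWeight (d j) - klWeight (d i)‖ = Real.cot (d j / 2) / 2 - Real.cot (d i / 2) / 2 := by
    rw [norm_klWeight_sub (hl.trans_le (hmem j hj).1) h (by linarith [(hmem i hi).2]), sub_div]
  have hN : d N ≤ d 0 :=
    antitoneOn_of_succ_le (s := Set.Iic N) Set.ordConnected_Iic
      (fun j _ _ hj => hanti j hj) (Set.mem_Iic.2 (Nat.zero_le N))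
      Set.self_mem_Iic (Nat.zero_le N)
  calc ∑ j ∈ Finset.range N, ‖klWeight (d (j + 1)) - klWeight (d j)‖
      = ∑ j ∈ Finset.range N, (Real.cot (d (j + 1) / 2) / 2 - Real.cot (d j / 2) / 2) := by
        refine Finset.sum_congr rfl fun j hj => ?_
        rw [Finset.mem_range] at hj
        exact norm_sub hj.le hj (hanti j hj)
    _ = ‖klWeight (d N) - klWeight (d 0)‖ := by
        rw [Finset.sum_range_sub fun j => Real.cot (d j / 2) / 2,
          norm_sub (Nat.zero_le N) le_rfl hN]
    _ ≤ ‖klWeight (d N)‖ + ‖klWeight (d 0)‖ := norm_sub_le _ _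
    _ ≤ π / l / 2 + π / l / 2 := by
        gcongr
        · exact norm_klWeight_le hl (hmem N le_rfl)
        · exact norm_klWeight_le hl (hmem 0 (Nat.zero_le N))
    _ = π / l := add_halves _

theorem kuzmin_landau {f : ℕ → ℝ} {N : ℕ} {l : ℝ} (hl : 0 < l) (σ : ℤ)
    (hmem : ∀ j, j + 1 < N →
      f (j + 1) - f j - 2 * π * σ ∈ Set.Icc l (2 * π - l))
    (hanti : ∀ j, j + 2 < N → f (j + 2) - f (j + 1) ≤ f (j + 1) - f j) :
    ‖∑ j ∈ Finset.range N, Complex.exp (Complex.I * f j)‖ ≤ 1 + 2 * π / l := by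
  have hpos : 0 < 2 * π / l := by positivity
  obtain _ | _ | N := N
  · simpa only [Finset.range_zero, Finset.sum_empty, norm_zero] using by linarith
  · simpa [Complex.norm_exp_I_mul_ofReal] using hpos.le
  set d : ℕ → ℝ := fun j => f (j + 1) - f j - 2 * π * σ with hd
  set z : ℕ → ℂ := fun j => Complex.exp (Complex.I * f j) with hz
  have hd_mem (j : ℕ) (hj : j ≤ N) : d j ∈ Set.Icc l (2 * π - l) := hmem j (by lia)
  have hd_anti (j : ℕ) (hj : j < N) : d (j + 1) ≤ d j := sub_le_sub_right (hanti j (by lia)) _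
  have hz_norm (j : ℕ) : ‖z j‖ ≤ 1 := (Complex.norm_exp_I_mul_ofReal (f j)).le
  have hz_succ (j : ℕ) : z (j + 1) = Complex.exp (Complex.I * d j) * z j := by
    simp only [hz, hd, ← Complex.exp_add]
    exact Complex.exp_eq_exp_iff_exists_int.2 ⟨σ, by push_cast; ring⟩
  have hz_eq (j : ℕ) (hj : j ≤ N) : z j = klWeight (d j) * (z (j + 1) - z j) := by
    rw [hz_succ, klWeight_mul_sub (hl.trans_le (hd_mem j hj).1) (by linarith [(hd_mem j hj).2])]
  have hsum : ∑ j ∈ Finset.range (N + 1), z j =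
      ∑ j ∈ Finset.range (N + 1), klWeight (d j) * (z (j + 1) - z j) :=
    Finset.sum_congr rfl fun j hj => hz_eq j (Finset.mem_range_succ_iff.1 hj)
  calc ‖∑ j ∈ Finset.range (N + 2), z j‖
      ≤ ‖∑ j ∈ Finset.range (N + 1), z j‖ + ‖z (N + 1)‖ := by
        rw [Finset.sum_range_succ]; exact norm_add_le _ _
    _ ≤ ‖klWeight (d N)‖ + ‖klWeight (d 0)‖ +
          ∑ j ∈ Finset.range N, ‖klWeight (d (j + 1)) - klWeight (d j)‖ + 1 := by
        rw [hsum]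
        exact add_le_add (norm_sum_range_succ_mul_sub_le (fun j => klWeight (d j)) hz_norm N)
          (hz_norm _)
    _ ≤ π / l / 2 + π / l / 2 + π / l + 1 := by
        gcongr
        · exact norm_klWeight_le hl (hd_mem N le_rfl)
        · exact norm_klWeight_le hl (hd_mem 0 (Nat.zero_le N))
        · exact sum_norm_klWeight_sub_le hl hd_mem hd_anti
    _ = 1 + 2 * π / l := by ring

/-! ### Exponential sums over arithmetic progressions -/

lemma exists_filter_Icc_modEq_eq_image (p q v : ℤ) {r : ℤ} (hr : 0 < r) :
    ∃ (p₀ : ℤ) (N : ℕ), {y ∈ Finset.Icc p q | y ≡ v [ZMOD r]} =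
      (Finset.range N).image fun j : ℕ => p₀ + r * j := by
  set c := ⌈((p - v : ℤ) : ℚ) / r⌉
  set d := ⌈((q + 1 - v : ℤ) : ℚ) / r⌉
  refine ⟨r * c + v, (d - c).toNat, ?_⟩
  have hIco : Finset.Ico c d = (Finset.range (d - c).toNat).image fun j : ℕ => c + (j : ℤ) :=
    Finset.map_eq_image _ _
  rw [show Finset.Icc p q = Finset.Ico p (q + 1) by ext; simp, Int.Ico_filter_modEq_eq,
    Int.Ico_filter_dvd_eq _ _ hr, Finset.map_map, Finset.map_eq_image, hIco, Finset.image_image]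
  refine Finset.image_congr fun j _ => ?_
  simp only [Function.comp_apply, Function.Embedding.trans_apply, Function.Embedding.coeFn_mk]
  ring

theorem norm_sum_Icc_modEq_exp_le {f f' : ℝ → ℝ} {p q r : ℤ} (hr : 0 < r) (v σ : ℤ)
    {l : ℝ} (hl : 0 < l) (hf : ∀ x ∈ Set.Icc (p : ℝ) q, HasDerivAt f (f' x) x)
    (hanti : AntitoneOn f' (Set.Icc (p : ℝ) q))
    (hmem : ∀ x ∈ Set.Icc (p : ℝ) q,
      r * f' x - 2 * π * σ ∈ Set.Icc l (2 * π - l)) :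
    ‖∑ y ∈ Finset.Icc p q with y ≡ v [ZMOD r], Complex.exp (Complex.I * f y)‖ ≤
      1 + 2 * π / l := by
  have hr' : (0 : ℝ) < r := by exact_mod_cast hr
  obtain ⟨p₀, N, himage⟩ := exists_filter_Icc_modEq_eq_image p q v hr
  have hinj : Function.Injective fun j : ℕ => p₀ + r * (j : ℤ) := fun i j hij => by
    simpa [hr.ne'] using hij
  set x : ℕ → ℝ := fun j => ((p₀ + r * j : ℤ) : ℝ) with hx
  have hx_succ (j : ℕ) : x (j + 1) - x j = r := by simp only [hx]; push_cast; ring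
  have hx_mem (j : ℕ) (hj : j < N) : x j ∈ Set.Icc (p : ℝ) q := by
    have hj' : p₀ + r * j ∈ {y ∈ Finset.Icc p q | y ≡ v [ZMOD r]} :=
      himage ▸ Finset.mem_image_of_mem _ (Finset.mem_range.2 hj)
    have := Finset.mem_Icc.1 (Finset.mem_filter.1 hj').1
    exact ⟨Int.cast_le.2 this.1, Int.cast_le.2 this.2⟩
  have hmvt (j : ℕ) (hj : j + 1 < N) :
      ∃ ξ ∈ Set.Ioo (x j) (x (j + 1)), f (x (j + 1)) - f (x j) = r * f' ξ := by
    have hsub : Set.Icc (x j) (x (j + 1)) ⊆ Set.Icc p q :=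
      Set.Icc_subset_Icc (hx_mem j (by lia)).1 (hx_mem (j + 1) hj).2
    obtain ⟨ξ, hξ, h⟩ := exists_hasDerivAt_eq_slope f f'
      (show x j < x (j + 1) by linarith [hx_succ j])
      (fun z hz => (hf z (hsub hz)).continuousAt.continuousWithinAt)
      (fun z hz => hf z (hsub (Set.Ioo_subset_Icc_self hz)))
    refine ⟨ξ, hξ, ?_⟩
    rw [h, hx_succ, mul_div_cancel₀ _ hr'.ne']
  choose! ξ hξ hslope using hmvt
  have hξ_mem (j : ℕ) (hj : j + 1 < N) : ξ j ∈ Set.Icc (p : ℝ) q :=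
    ⟨(hx_mem j (by lia)).1.trans (hξ j hj).1.le, (hξ j hj).2.le.trans (hx_mem (j + 1) hj).2⟩
  rw [himage, Finset.sum_image hinj.injOn]
  refine kuzmin_landau (f := fun j => f (x j)) hl σ (fun j hj => ?_) (fun j hj => ?_)
  · rw [hslope j hj]
    exact hmem _ (hξ_mem j hj)
  · rw [hslope j (by lia), hslope (j + 1) hj]
    gcongr
    exact hanti (hξ_mem j (by lia)) (hξ_mem (j + 1) hj)
      ((hξ j (by lia)).2.trans (hξ (j + 1) hj).1).le

lemma norm_sum_filter_Icc_le {E : Type*} [SeminormedAddCommGroup E] {g : ℤ → E}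
    (hg : ∀ y, ‖g y‖ ≤ 1) (P : ℤ → Prop) [DecidablePred P] (p q : ℤ) {K : ℤ} (hK : 0 < K) :
    ‖∑ y ∈ Finset.Icc p q with P y, g y‖ ≤
      ‖∑ y ∈ Finset.Icc p (min q (-K)) with P y, g y‖ + 2 * K +
        ‖∑ y ∈ Finset.Icc (max p K) q with P y, g y‖ := by
  set s := {y ∈ Finset.Icc p q | P y}
  have hleft : {y ∈ Finset.Icc p (min q (-K)) | P y} = {y ∈ s | y ≤ -K} := by
    ext y; simp only [s, Finset.mem_filter, Finset.mem_Icc]; grind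
  have hright : {y ∈ Finset.Icc (max p K) q | P y} = {y ∈ {y ∈ s | ¬ y ≤ -K} | K ≤ y} := by
    ext y; simp only [s, Finset.mem_filter, Finset.mem_Icc]; grind
  have hmid : ‖∑ y ∈ {y ∈ s | ¬ y ≤ -K} with ¬ K ≤ y, g y‖ ≤ 2 * K := by
    have hcard : ({y ∈ {y ∈ s | ¬ y ≤ -K} | ¬ K ≤ y}.card : ℤ) ≤ 2 * K := by
      have hsub : {y ∈ {y ∈ s | ¬ y ≤ -K} | ¬ K ≤ y} ⊆ Finset.Ioo (-K) K := fun y => by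
        simp only [Finset.mem_filter, Finset.mem_Ioo]; lia
      have := Finset.card_le_card hsub
      rw [Int.card_Ioo] at this
      lia
    calc _ ≤ ∑ y ∈ {y ∈ s | ¬ y ≤ -K} with ¬ K ≤ y, (1 : ℝ) :=
          norm_sum_le_of_le _ fun y _ => hg y
      _ = ({y ∈ {y ∈ s | ¬ y ≤ -K} | ¬ K ≤ y}.card : ℝ) := by simp
      _ ≤ 2 * K := by exact_mod_cast hcard
  rw [hleft, hright, ← Finset.sum_filter_add_sum_filter_not s (· ≤ -K),
    ← Finset.sum_filter_add_sum_filter_not {y ∈ s | ¬ y ≤ -K} (K ≤ ·), add_assoc,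
    add_comm (2 * (K : ℝ))]
  refine (norm_add_le _ _).trans ?_
  gcongr
  refine (norm_add_le _ _).trans ?_
  gcongr

/-! ### The phase functions -/

section PhaseFunctions

variable {a b : ℂ}

lemma tF_neg (a b : ℂ) (η : ℝ) : tF a b (-η) = -tF a b η := by
  simp only [tF, neg_sq, mul_neg, neg_div, Real.arcsin_neg]

lemma thetaF_neg (a b : ℂ) (η : ℝ) : thetaF a b (-η) = thetaF a b η := by
  simp only [thetaF, muF, tF_neg, Real.cos_neg]
  ring

lemma tF_eq_arcsin_tan_arcsin (a b : ℂ) (η : ℝ) :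
    tF a b η = Real.arcsin (‖b‖ / ‖a‖ * Real.tan (Real.arcsin η)) := by
  rw [tF, Real.tan_arcsin, mul_div_mul_comm]

lemma monotoneOn_tF (a b : ℂ) : MonotoneOn (tF a b) (Set.Ioo (-1) 1) := by
  have arcsin_mem {η : ℝ} (hη : η ∈ Set.Ioo (-1 : ℝ) 1) :
      Real.arcsin η ∈ Set.Ioo (-(π / 2)) (π / 2) :=
    ⟨Real.neg_pi_div_two_lt_arcsin.2 hη.1, Real.arcsin_lt_pi_div_two.2 hη.2⟩
  intro x hx y hy hxy
  rw [tF_eq_arcsin_tan_arcsin, tF_eq_arcsin_tan_arcsin]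
  refine Real.arcsin_le_arcsin (mul_le_mul_of_nonneg_left ?_ (by positivity))
  exact Real.strictMonoOn_tan.monotoneOn (arcsin_mem hx) (arcsin_mem hy)
    (Real.arcsin_le_arcsin hxy)

lemma norm_le_one_of_sq_add_sq_eq_one (hab : ‖a‖ ^ 2 + ‖b‖ ^ 2 = 1) : ‖a‖ ≤ 1 := by
  rw [← sq_le_one_iff₀ (norm_nonneg a)]
  linarith [sq_nonneg ‖b‖]

lemma mem_Ioo_neg_one_one_of_abs_lt_norm (hab : ‖a‖ ^ 2 + ‖b‖ ^ 2 = 1) {η : ℝ}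
    (hη : |η| < ‖a‖) : η ∈ Set.Ioo (-1) 1 :=
  abs_lt.1 (hη.trans_le (norm_le_one_of_sq_add_sq_eq_one hab))

lemma one_sub_sq_pos_of_abs_lt_norm (hab : ‖a‖ ^ 2 + ‖b‖ ^ 2 = 1) {η : ℝ} (hη : |η| < ‖a‖) :
    0 < 1 - η ^ 2 :=
  sub_pos.2 ((sq_lt_one_iff_abs_lt_one η).2 (abs_lt.2 (mem_Ioo_neg_one_one_of_abs_lt_norm hab hη)))

lemma abs_tF_arg_lt_one (hab : ‖a‖ ^ 2 + ‖b‖ ^ 2 = 1) {η : ℝ} (hη : |η| < ‖a‖) :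
    |‖b‖ * η / (‖a‖ * √(1 - η ^ 2))| < 1 := by
  have ha : 0 < ‖a‖ := (abs_nonneg η).trans_lt hη
  have h1 : 0 < 1 - η ^ 2 := one_sub_sq_pos_of_abs_lt_norm hab hη
  have h2 : η ^ 2 < ‖a‖ ^ 2 := sq_lt_sq.2 (by rwa [abs_norm])
  rw [← sq_lt_one_iff_abs_lt_one, div_pow, mul_pow, mul_pow, Real.sq_sqrt h1.le,
    div_lt_one (by positivity)]
  linear_combination h2 + η ^ 2 * hab

lemma sin_tF (hab : ‖a‖ ^ 2 + ‖b‖ ^ 2 = 1) {η : ℝ} (hη : |η| < ‖a‖) :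
    Real.sin (tF a b η) = ‖b‖ * η / (‖a‖ * √(1 - η ^ 2)) :=
  have h := abs_lt.1 (abs_tF_arg_lt_one hab hη)
  Real.sin_arcsin h.1.le h.2.le

lemma tF_lt_pi_div_two (hab : ‖a‖ ^ 2 + ‖b‖ ^ 2 = 1) {η : ℝ} (hη : |η| < ‖a‖) :
    tF a b η < π / 2 :=
  Real.arcsin_lt_pi_div_two.2 (abs_lt.1 (abs_tF_arg_lt_one hab hη)).2

lemma norm_mul_le_tF (hab : ‖a‖ ^ 2 + ‖b‖ ^ 2 = 1) {η : ℝ} (h0 : 0 ≤ η) (hη : |η| < ‖a‖) :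
    ‖b‖ * η ≤ tF a b η := by
  have ha : 0 < ‖a‖ := (abs_nonneg η).trans_lt hη
  have hsqrt : 0 < √(1 - η ^ 2) := Real.sqrt_pos.2 (one_sub_sq_pos_of_abs_lt_norm hab hη)
  have hden : ‖a‖ * √(1 - η ^ 2) ≤ 1 :=
    mul_le_one₀ (norm_le_one_of_sq_add_sq_eq_one hab) hsqrt.le
      (Real.sqrt_le_one.2 (sub_le_self 1 (sq_nonneg η)))
  calc ‖b‖ * η ≤ ‖b‖ * η / (‖a‖ * √(1 - η ^ 2)) :=
        le_div_self (by positivity) (by positivity) hden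
    _ = Real.sin (tF a b η) := (sin_tF hab hη).symm
    _ ≤ tF a b η := Real.sin_le (Real.arcsin_nonneg.2 (by positivity))

lemma differentiableAt_tF (hab : ‖a‖ ^ 2 + ‖b‖ ^ 2 = 1) {η : ℝ} (hη : |η| < ‖a‖) :
    DifferentiableAt ℝ (tF a b) η := by
  have ha : 0 < ‖a‖ := (abs_nonneg η).trans_lt hη
  have h1 : 0 < 1 - η ^ 2 := one_sub_sq_pos_of_abs_lt_norm hab hη
  have harg := abs_lt.1 (abs_tF_arg_lt_one hab hη)
  refine DifferentiableAt.fun_comp' (g := Real.arcsin) η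
    (Real.differentiableAt_arcsin.2 ⟨harg.1.ne', harg.2.ne⟩) ?_
  have hsqrt : DifferentiableAt ℝ (fun x : ℝ => √(1 - x ^ 2)) η :=
    DifferentiableAt.sqrt (by fun_prop) h1.ne'
  exact DifferentiableAt.div (by fun_prop) (hsqrt.const_mul _) (by positivity)

lemma one_sub_sq_norm_mul_cos_tF (hab : ‖a‖ ^ 2 + ‖b‖ ^ 2 = 1) {η : ℝ} (hη : |η| < ‖a‖) :
    1 - (‖a‖ * Real.cos (tF a b η)) ^ 2 = ‖b‖ ^ 2 / (1 - η ^ 2) := by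
  have ha : 0 < ‖a‖ := (abs_nonneg η).trans_lt hη
  have h1 : 0 < 1 - η ^ 2 := one_sub_sq_pos_of_abs_lt_norm hab hη
  rw [mul_pow, Real.cos_sq', sin_tF hab hη, div_pow, mul_pow, mul_pow, Real.sq_sqrt h1.le]
  field_simp
  linear_combination (η ^ 2 - 1) * hab

lemma hasDerivAt_muF_tF (hab : ‖a‖ ^ 2 + ‖b‖ ^ 2 = 1) (hb : b ≠ 0) {η : ℝ} (hη : |η| < ‖a‖) :
    HasDerivAt (muF a) η (tF a b η) := by
  have ha : 0 < ‖a‖ := (abs_nonneg η).trans_lt hη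
  have hb' : 0 < ‖b‖ := norm_pos_iff.2 hb
  have h1 : 0 < 1 - η ^ 2 := one_sub_sq_pos_of_abs_lt_norm hab hη
  have hsq := one_sub_sq_norm_mul_cos_tF hab hη
  have harg : |‖a‖ * Real.cos (tF a b η)| < 1 := by
    rw [← sq_lt_one_iff_abs_lt_one, ← sub_pos, hsq]
    positivity
  refine ((Real.hasDerivAt_arccos (abs_lt.1 harg).1.ne' (abs_lt.1 harg).2.ne).comp (tF a b η)
    ((Real.hasDerivAt_cos (tF a b η)).const_mul ‖a‖)).congr_deriv ?_
  have : 0 < √(1 - η ^ 2) := Real.sqrt_pos.2 h1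
  rw [hsq, Real.sqrt_div (sq_nonneg _), Real.sqrt_sq hb'.le, sin_tF hab hη]
  field_simp

lemma hasDerivAt_thetaF (hab : ‖a‖ ^ 2 + ‖b‖ ^ 2 = 1) (hb : b ≠ 0) {η : ℝ} (hη : |η| < ‖a‖) :
    HasDerivAt (thetaF a b) (-2 * tF a b η) η := by
  have ht := (differentiableAt_tF hab hη).hasDerivAt
  refine ((((hasDerivAt_muF_tF hab hb hη).comp η ht).const_mul 2).sub
    (((hasDerivAt_id η).const_mul 2).mul ht)).congr_deriv ?_
  simp only [id_eq]
  ring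

lemma exists_mul_le_four_mul_tF_le (hab : ‖a‖ ^ 2 + ‖b‖ ^ 2 = 1) (hb : b ≠ 0) {c : ℝ}
    (hc : |c| < ‖a‖) :
    ∃ κ > 0, ∀ η ∈ Set.Icc 0 c, κ * η ≤ 4 * tF a b η ∧ 4 * tF a b η ≤ 2 * π - κ := by
  have hb' : 0 < ‖b‖ := norm_pos_iff.2 hb
  have hgap : 0 < 2 * π - 4 * tF a b c := by linarith [tF_lt_pi_div_two hab hc]
  refine ⟨min (4 * ‖b‖) (2 * π - 4 * tF a b c), lt_min (mul_pos four_pos hb') hgap, fun η hη => ?_⟩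
  have hηc : |η| ≤ |c| := abs_le_abs_of_nonneg hη.1 hη.2
  constructor
  · calc _ ≤ 4 * ‖b‖ * η := mul_le_mul_of_nonneg_right (min_le_left _ _) hη.1
      _ ≤ 4 * tF a b η := by linarith [norm_mul_le_tF hab hη.1 (hηc.trans_lt hc)]
  · have := monotoneOn_tF a b (mem_Ioo_neg_one_one_of_abs_lt_norm hab (hηc.trans_lt hc))
      (mem_Ioo_neg_one_one_of_abs_lt_norm hab hc) hη.2
    linarith [min_le_right (4 * ‖b‖) (2 * π - 4 * tF a b c)]

end PhaseFunctions

/-! ### The phase sums -/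

/-- The exponential sum `∑ e^{inθ(y/n)}` over the integers `y ∈ [p, q]` of the same parity as `n`;
the partial sums of the theorem are of this form. -/
def phaseSum (a b : ℂ) (n : ℕ) (p q : ℤ) : ℂ :=
  ∑ y ∈ Finset.Icc p q with Even ((n : ℤ) + y),
    Complex.exp (Complex.I * n * thetaF a b (y / n))

section PhaseSum

variable {a b : ℂ}

lemma phaseSum_neg (a b : ℂ) (n : ℕ) (p q : ℤ) :
    phaseSum a b n (-q) (-p) = phaseSum a b n p q := by
  refine Finset.sum_equiv (Equiv.neg ℤ) (fun y => ?_) fun y _ => ?_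
  · simp only [Finset.mem_filter, Finset.mem_Icc, Equiv.neg_apply, Int.even_add, even_neg]
    lia
  · rw [Equiv.neg_apply, Int.cast_neg, neg_div, thetaF_neg]

lemma norm_phaseSum_le_split (a b : ℂ) (n : ℕ) (p q : ℤ) {K : ℤ} (hK : 0 < K) :
    ‖phaseSum a b n p q‖ ≤
      ‖phaseSum a b n (max (-q) K) (-p)‖ + 2 * K + ‖phaseSum a b n (max p K) q‖ := by
  have hnorm (y : ℤ) : ‖Complex.exp (Complex.I * n * thetaF a b (y / n))‖ ≤ 1 := by
    have := Complex.norm_exp_I_mul_ofReal (n * thetaF a b (y / n))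
    rw [Complex.ofReal_mul, Complex.ofReal_natCast, ← mul_assoc] at this
    exact this.le
  rw [← neg_neg (max (-q) K), ← min_neg_neg, neg_neg, phaseSum_neg]
  exact norm_sum_filter_Icc_le hnorm _ p q hK

theorem norm_phaseSum_le (hab : ‖a‖ ^ 2 + ‖b‖ ^ 2 = 1) (hb : b ≠ 0) {n : ℕ} (hn : 0 < n)
    {p q : ℤ} {l : ℝ} (hl : 0 < l) (ha : ∀ x ∈ Set.Icc (p : ℝ) q, |x / n| < ‖a‖)
    (hmem : ∀ x ∈ Set.Icc (p : ℝ) q, 4 * tF a b (x / n) ∈ Set.Icc l (2 * π - l)) :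
    ‖phaseSum a b n p q‖ ≤ 1 + 2 * π / l := by
  have hderiv (x : ℝ) (hx : x ∈ Set.Icc (p : ℝ) q) :
      HasDerivAt (fun x => n * thetaF a b (x / n)) (-2 * tF a b (x / n)) x := by
    refine (((hasDerivAt_thetaF hab hb (ha x hx)).comp x
      ((hasDerivAt_id x).div_const (n : ℝ))).const_mul (n : ℝ)).congr_deriv ?_
    field_simp
  have hanti : AntitoneOn (fun x => -2 * tF a b (x / n)) (Set.Icc (p : ℝ) q) := fun x hx y hy hxy =>
    mul_le_mul_of_nonpos_left (monotoneOn_tF a b (mem_Ioo_neg_one_one_of_abs_lt_norm hab (ha x hx))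
      (mem_Ioo_neg_one_one_of_abs_lt_norm hab (ha y hy)) (by gcongr)) (by norm_num)
  have hparity (y : ℤ) : Even ((n : ℤ) + y) ↔ y ≡ n [ZMOD 2] := by
    rw [Int.even_iff, Int.ModEq]
    lia
  have h := norm_sum_Icc_modEq_exp_le two_pos n (-1) hl hderiv hanti fun x hx => by
    have := hmem x hx
    rw [Set.mem_Icc] at this ⊢
    push_cast
    constructor <;> linarith
  simpa only [phaseSum, hparity, Complex.ofReal_mul, Complex.ofReal_natCast, ← mul_assoc] using h

theorem exists_norm_phaseSum_le_mul_sqrt_of_sqrt_le (hab : ‖a‖ ^ 2 + ‖b‖ ^ 2 = 1) (hb : b ≠ 0)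
    {c : ℝ} (hc : |c| < ‖a‖) :
    ∃ C > 0, ∀ n : ℕ, 0 < n → ∀ p q : ℤ, √n ≤ p → q ≤ n * c →
      ‖phaseSum a b n p q‖ ≤ C * √n := by
  obtain ⟨κ, hκ, hgap⟩ := exists_mul_le_four_mul_tF_le hab hb hc
  refine ⟨1 + 2 * π / κ, by positivity, fun n hn p q hp hq => ?_⟩
  have hn' : (0 : ℝ) < n := Nat.cast_pos.2 hn
  have hsqrt : 1 ≤ √(n : ℝ) := Real.one_le_sqrt.2 (Nat.one_le_cast.2 hn)
  have hrange (x : ℝ) (hx : x ∈ Set.Icc (p : ℝ) q) : 1 / √n ≤ x / n ∧ x / n ≤ c := by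
    refine ⟨?_, (div_le_iff₀' hn').2 (hx.2.trans hq)⟩
    rw [← Real.sqrt_div_self']
    exact div_le_div_of_nonneg_right (hp.trans hx.1) hn'.le
  have hnonneg (x : ℝ) (hx : x ∈ Set.Icc (p : ℝ) q) : 0 ≤ x / n :=
    (by positivity : 0 ≤ 1 / √(n : ℝ)).trans (hrange x hx).1
  calc ‖phaseSum a b n p q‖ ≤ 1 + 2 * π / (κ / √n) := by
        refine norm_phaseSum_le hab hb hn (by positivity) (fun x hx => ?_) fun x hx => ?_
        · exact (abs_le_abs_of_nonneg (hnonneg x hx) (hrange x hx).2).trans_lt hc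
        · have hx_gap := hgap (x / n) ⟨hnonneg x hx, (hrange x hx).2⟩
          constructor
          · calc κ / √n = κ * (1 / √n) := by rw [mul_one_div]
              _ ≤ κ * (x / n) := mul_le_mul_of_nonneg_left (hrange x hx).1 hκ.le
              _ ≤ 4 * tF a b (x / n) := hx_gap.1
          · linarith [div_le_self hκ.le hsqrt]
    _ = 1 + 2 * π / κ * √n := by field_simp
    _ ≤ (1 + 2 * π / κ) * √n := by linarith

theorem exists_norm_phaseSum_le_mul_sqrt (hab : ‖a‖ ^ 2 + ‖b‖ ^ 2 = 1) (hb : b ≠ 0)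
    {c : ℝ} (hc : |c| < ‖a‖) :
    ∃ C > 0, ∀ n : ℕ, 0 < n → ∀ p q : ℤ, n * (-c) ≤ p → q ≤ n * c →
      ‖phaseSum a b n p q‖ ≤ C * √n := by
  obtain ⟨C, hC, hbound⟩ := exists_norm_phaseSum_le_mul_sqrt_of_sqrt_le hab hb hc
  refine ⟨2 * C + 4, by positivity, fun n hn p q hp hq => ?_⟩
  have hsqrt : 1 ≤ √(n : ℝ) := Real.one_le_sqrt.2 (Nat.one_le_cast.2 hn)
  set K : ℤ := ⌈√(n : ℝ)⌉
  have hK : √(n : ℝ) ≤ K := Int.le_ceil _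
  have hK_lt : (K : ℝ) < √n + 1 := Int.ceil_lt_add_one _
  have hle_max (r : ℤ) : √(n : ℝ) ≤ (max r K : ℤ) := hK.trans (Int.cast_le.2 (le_max_right r K))
  have hleft := hbound n hn (max (-q) K) (-p) (hle_max _) (by push_cast; linarith)
  have hright := hbound n hn (max p K) q (hle_max _) hq
  have hsplit := norm_phaseSum_le_split a b n p q (Int.ceil_pos.2 (one_pos.trans_le hsqrt))
  linarith

lemma sum_filter_le_Tset (a b : ℂ) (α β : ℝ) (n : ℕ) (m : ℤ) :
    ∑ y ∈ (Tset α β n).filter (· ≤ m),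
        Complex.exp (Complex.I * (n : ℂ) * ((thetaF a b ((y : ℝ) / (n : ℝ)) : ℝ) : ℂ)) =
      phaseSum a b n ⌈(n : ℝ) * α⌉ (min ⌊(n : ℝ) * β⌋ m) := by
  refine Finset.sum_congr ?_ fun _ _ => rfl
  ext y
  simp only [Tset, Finset.mem_filter, Finset.mem_Icc, le_min_iff]
  tauto

end PhaseSum

theorem stmt11_general (a b : ℂ) (hab1 : ‖a‖ ^ 2 + ‖b‖ ^ 2 = 1) (hab : a * b ≠ 0)
    (α β : ℝ) (hα : -‖a‖ < α) (hβ : β < ‖a‖) :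
    ∃ C : ℝ, 0 < C ∧
      ∀ n : ℕ, 0 < n → ∀ m : ℤ,
        ‖∑ y ∈ (Tset α β n).filter (· ≤ m),
            Complex.exp (Complex.I * (n : ℂ) * ((thetaF a b ((y : ℝ) / (n : ℝ)) : ℝ) : ℂ))‖ ≤
          C * √n := by
  have ha : 0 < ‖a‖ := norm_pos_iff.2 (left_ne_zero_of_mul hab)
  set c : ℝ := max 0 (max (-α) β)
  have hc : |c| < ‖a‖ := by
    rw [abs_of_nonneg (le_max_left _ _)]
    exact max_lt ha (max_lt (neg_lt.1 hα) hβ)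
  have hαc : -c ≤ α := neg_le.1 ((le_max_left _ _).trans (le_max_right _ _))
  have hβc : β ≤ c := (le_max_right _ _).trans (le_max_right _ _)
  obtain ⟨C, hC, hbound⟩ := exists_norm_phaseSum_le_mul_sqrt hab1 (right_ne_zero_of_mul hab) hc
  refine ⟨C, hC, fun n hn m => ?_⟩
  rw [sum_filter_le_Tset]
  refine hbound n hn _ _ ?_ ?_
  · exact le_trans (by gcongr) (Int.le_ceil _)
  · calc ((min ⌊(n : ℝ) * β⌋ m : ℤ) : ℝ) ≤ ⌊(n : ℝ) * β⌋ := Int.cast_le.2 (min_le_left _ _)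
      _ ≤ n * β := Int.floor_le _
      _ ≤ n * c := by gcongr

/-- Lemma `RmLb`(2): if `0 ∈ [α,β]` and `1/6 < δ < 1/2`, the partial
exponential sums `∑_{j=0}^{k} e^{inθ(y_j/n)}` are `≤ C n^{1/2+δ}` uniformly in `n` and
`k ≤ s_n`. -/
theorem stmt11 (a b : ℂ) (hab1 : ‖a‖ ^ 2 + ‖b‖ ^ 2 = 1) (hab : a * b ≠ 0)
    (α β : ℝ) (hα : -‖a‖ < α) (hαβ : α < β) (hβ : β < ‖a‖)
    (h0 : 0 ∈ Set.Icc α β) (δ : ℝ) (hδ1 : 1 / 6 < δ) (hδ2 : δ < 1 / 2) :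
    ∃ C : ℝ, 0 < C ∧
      ∀ n : ℕ, 0 < n → ∀ m : ℤ,
        ‖∑ y ∈ (Tset α β n).filter (· ≤ m),
            Complex.exp (Complex.I * (n : ℂ) * ((thetaF a b ((y : ℝ) / (n : ℝ)) : ℝ) : ℂ))‖ ≤
          C * (n : ℝ) ^ ((1 : ℝ) / 2 + δ) := by
  obtain ⟨C, hC, hbound⟩ := stmt11_general a b hab1 hab α β hα hβ
  refine ⟨C, hC, fun n hn m => (hbound n hn m).trans ?_⟩
  rw [Real.sqrt_eq_rpow]
  gcongr
  · exact Nat.one_le_cast.2 hn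
  · linarith
end
end

section
/- Fix a sign ε ∈ {+1, −1} and suppose a sequence of integers {y_n} satisfies y_n = ε n|a| + d_n with d_n = O(n^{1/3}). Then for every ψ ∈ ℂ² with ‖ψ‖ = 1, ⟨Uⁿ(δ₀ ⊗ φ), δ_{y_n} ⊗ ψ⟩_{ℓ²} = ω^{−y_n} e^{iπ(n − ε y_n)/2} (1 + (−1)^{n+y_n}) f_ψ(ε i) α₀ n^{−1/3} Ai(ε α₀ n^{−1/3} d_n) + O(n^{−2/3}) as n → ∞, where α₀ = (2/(|a||b|²))^{1/3}. -/
/-!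
Write `α = |a|` and `ζ = exp (iε(π/2 - w))`, so that `ζ = εi` is `w = 0`. The symbol `A(ωζ)` has the
eigenvalues `λ(w) = i exp (-i arcsin (α sin w))` and `-λ(w + π)`, and `w`, `w + π` give antipodal
points `ζ`. Since `δ₀ ⊗ φ` is a superposition of plane waves over one period of any horizontal line,
the two branches contribute equally up to the sign `(-1)^{n+y}`, and the amplitude is
`1 + (-1)^{n+y}` times one integral over a period of a line `Im w = η`, with `η` at our disposal.

For `εy = nα + εd` the oscillating factor of this integral is, up to a constant phase,
`exp (i (n q(w) + εd w))` with `q(w) = αw - arcsin (α sin w)`. The only critical point of `q` in a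
period is `w = 0`, where `q(w) = c w³/3 + O(w⁴)` with `c = α(1 - α²)/2 = α₀⁻³`. Because of
`Im q(s + iη) ≥ κηs² - Aη³`, on the line `Im w = α₀ n^{-1/3}` the integrand is dominated by a
Gaussian of width `n^{-1/3}`, and it differs from its cubic model by `O(n^{-1/3})` times such a
Gaussian, which integrates to `O(n^{-2/3})`. The model integral is the Airy integral on a shifted
contour, and its coefficient is the spectral projection at `w = 0`, whose matrix element is
`f_ψ(εi)`.
-/

open Filter Topology Asymptotics MeasureTheory

noncomputable section

/-- The standard inner product on `ℂ²`, conjugate-linear in the second argument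
(the convention of the paper): `⟨u, v⟩ = u₁ conj(v₁) + u₂ conj(v₂)`. -/
def innC (u v : ℂ × ℂ) : ℂ :=
  u.1 * (starRingEnd ℂ) v.1 + u.2 * (starRingEnd ℂ) v.2

/-- `φ̃(z) = (z + z⁻¹)/2`; on the unit circle this is real (`= Re z`). -/
def phit (z : ℂ) : ℝ := ((z + z⁻¹) / 2).re

/-- The eigenvalue `λ(z) = |a|φ̃(z) + i√(1 − |a|²φ̃(z)²)` of `A(ωz)`, for `z ∈ S¹`. -/
def lamS (a : ℂ) (z : ℂ) : ℂ :=
  ((‖a‖ * phit z : ℝ) : ℂ) +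
    Complex.I * ((Real.sqrt (1 - ‖a‖ ^ 2 * phit z ^ 2) : ℝ) : ℂ)

/-- The normalizing factor `p(z) = √(|b|² + |λ(z) − |a| conj z|²)`. -/
def pnormF (a b : ℂ) (z : ℂ) : ℝ :=
  Real.sqrt (‖b‖ ^ 2 + ‖lamS a z - (‖a‖ : ℂ) * (starRingEnd ℂ) z‖ ^ 2)

/-- The unit eigenvector `u(z) = (1/p(z)) ((ab/|a|)z, λ(z) − |a| conj z)ᵀ` of `A(ωz)`. -/
def uvec (a b : ℂ) (z : ℂ) : ℂ × ℂ :=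
  (((pnormF a b z : ℝ) : ℂ)⁻¹ * (a * b / (‖a‖ : ℂ) * z),
   ((pnormF a b z : ℝ) : ℂ)⁻¹ * (lamS a z - (‖a‖ : ℂ) * (starRingEnd ℂ) z))

/-- `Jψ = (−conj ψ₂, conj ψ₁)ᵀ`. -/
def Jmap (ψ : ℂ × ℂ) : ℂ × ℂ := (-(starRingEnd ℂ) ψ.2, (starRingEnd ℂ) ψ.1)

/-- `f_ψ(z) = ⟨φ, u(z)⟩⟨u(z), ψ⟩`. -/
def fpsi (a b : ℂ) (φ ψ : ℂ × ℂ) (z : ℂ) : ℂ :=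
  innC φ (uvec a b z) * innC (uvec a b z) ψ

/-- `g_ψ(z) = ⟨φ, Ju(z)⟩⟨Ju(z), ψ⟩`. -/
def gpsi (a b : ℂ) (φ ψ : ℂ × ℂ) (z : ℂ) : ℂ :=
  innC φ (Jmap (uvec a b z)) * innC (Jmap (uvec a b z)) ψ

/-- The Airy function `Ai(x) = (1/2π)∫_{−∞}^{∞} e^{i(ξ³/3 + ξx)} dξ`, as an improper
(oscillatory) integral, i.e. the limit of `∫_{−R}^{R}` as `R → ∞`. -/
def Ai (x : ℝ) : ℂ :=
  ((1 / (2 * Real.pi) : ℝ) : ℂ) *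
    limUnder Filter.atTop
      (fun R : ℝ => ∫ t in (-R)..R, Complex.exp (Complex.I * ((t : ℂ) ^ 3 / 3 + (t : ℂ) * (x : ℂ))))


/-! ### Elementary estimates -/

lemma norm_sin_le_cosh_im (w : ℂ) : ‖Complex.sin w‖ ≤ Real.cosh w.im := by
  have h_neg : ‖Complex.exp (-w * Complex.I)‖ = Real.exp w.im := by simp [Complex.norm_exp]
  have h_pos : ‖Complex.exp (w * Complex.I)‖ = Real.exp (-w.im) := by simp [Complex.norm_exp]
  have h_tri := norm_sub_le (Complex.exp (-w * Complex.I)) (Complex.exp (w * Complex.I))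
  rw [h_neg, h_pos] at h_tri
  rw [Complex.sin, Real.cosh_eq, norm_div, norm_mul, Complex.norm_I, mul_one, Complex.norm_ofNat]
  linarith

lemma norm_exp_sub_exp_le {x y : ℂ} {M : ℝ} (hx : x.re ≤ M) (hy : y.re ≤ M) :
    ‖Complex.exp x - Complex.exp y‖ ≤ Real.exp M * ‖x - y‖ := by
  refine (convex_halfSpace_re_le M).norm_image_sub_le_of_norm_hasDerivWithin_le
    (fun z _ ↦ (Complex.hasDerivAt_exp z).hasDerivWithinAt) (fun z hz ↦ ?_) hy hx
  rw [Complex.norm_exp]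
  exact Real.exp_le_exp.2 hz

lemma norm_mul_exp_sub_mul_exp_le {g h x y : ℂ} {M : ℝ} (hx : x.re ≤ M) (hy : y.re ≤ M) :
    ‖g * Complex.exp x - h * Complex.exp y‖ ≤ (‖g - h‖ + ‖h‖ * ‖x - y‖) * Real.exp M := by
  have h_exp : ‖Complex.exp x‖ ≤ Real.exp M := by
    rw [Complex.norm_exp]
    exact Real.exp_le_exp.2 hx
  calc ‖g * Complex.exp x - h * Complex.exp y‖
      = ‖(g - h) * Complex.exp x + h * (Complex.exp x - Complex.exp y)‖ := by ring_nf
    _ ≤ ‖g - h‖ * ‖Complex.exp x‖ + ‖h‖ * ‖Complex.exp x - Complex.exp y‖ :=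
        norm_add_le_of_le (norm_mul_le _ _) (norm_mul_le _ _)
    _ ≤ ‖g - h‖ * Real.exp M + ‖h‖ * (Real.exp M * ‖x - y‖) := by
        gcongr
        exact norm_exp_sub_exp_le hx hy
    _ = _ := by ring

lemma pow_mul_exp_neg_le (k : ℕ) {κ : ℝ} (hκ : 0 < κ) (x β : ℝ) :
    (x ^ 2 + β ^ 2) ^ k * Real.exp (-κ * x ^ 2) ≤
      k.factorial * (2 / κ) ^ k * Real.exp (κ / 2 * β ^ 2) * Real.exp (-(κ / 2) * x ^ 2) := by
  have h_pow := Real.pow_div_factorial_le_exp (κ / 2 * (x ^ 2 + β ^ 2)) (by positivity) k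
  rw [div_le_iff₀ (by positivity), mul_pow] at h_pow
  calc (x ^ 2 + β ^ 2) ^ k * Real.exp (-κ * x ^ 2)
      = (2 / κ) ^ k * ((κ / 2) ^ k * (x ^ 2 + β ^ 2) ^ k) * Real.exp (-κ * x ^ 2) := by
        rw [← mul_assoc, ← mul_pow, div_mul_div_cancel₀' two_ne_zero, div_self hκ.ne']
        simp
    _ ≤ (2 / κ) ^ k * (Real.exp (κ / 2 * (x ^ 2 + β ^ 2)) * k.factorial) *
          Real.exp (-κ * x ^ 2) := by gcongr
    _ = k.factorial * (2 / κ) ^ k *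
          (Real.exp (κ / 2 * (x ^ 2 + β ^ 2)) * Real.exp (-κ * x ^ 2)) := by ring
    _ = _ := by
        rw [← Real.exp_add, mul_assoc _ (Real.exp _), ← Real.exp_add]
        ring_nf

lemma exists_norm_le_of_isBigO_nhds {X E F : Type*} [TopologicalSpace X]
    [SeminormedAddCommGroup E] [NormedAddCommGroup F] {f : X → E} {g : X → F} {K : Set X} {x₀ : X}
    (hK : IsCompact K) (hf : ContinuousOn f K) (hg : ContinuousOn g K)
    (hg₀ : ∀ x ∈ K, x ≠ x₀ → g x ≠ 0) (hfg : f =O[𝓝 x₀] g) :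
    ∃ B, 0 ≤ B ∧ ∀ x ∈ K, ‖f x‖ ≤ B * ‖g x‖ := by
  obtain ⟨C, hC⟩ := hfg.bound
  obtain ⟨U, hU, hU_open, hxU⟩ := eventually_nhds_iff.1 hC
  have h_near : f =O[𝓟 (K ∩ U)] g := isBigO_principal.2 ⟨C, fun x hx ↦ hU x hx.2⟩
  have hKU : IsCompact (K \ U) := hK.diff hU_open
  have h_far : f =O[𝓟 (K \ U)] g :=
    ((hf.mono Set.sdiff_subset).isBigO_principal (c := (1 : ℝ)) hKU (by simp)).trans <|
      (hg.mono Set.sdiff_subset).isBigO_rev_principal hKU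
        (fun x hx ↦ hg₀ x hx.1 fun h ↦ hx.2 (h ▸ hxU)) 1
  have h_all : f =O[𝓟 K] g := by
    simpa only [sup_principal, Set.inter_union_sdiff] using h_near.sup h_far
  obtain ⟨B, hB, h_bound⟩ := h_all.exists_nonneg
  exact ⟨B, hB, isBigOWith_principal.1 h_bound⟩

section SegmentTaylor

variable {E : Type*} [NormedAddCommGroup E] [NormedSpace ℝ E] {g g₁ g₂ g₃ : ℝ → E} {b C : ℝ}

lemma norm_sub_le_mul_pow_succ (k : ℕ) (hC : 0 ≤ C)
    (hg : ∀ v ∈ Set.Icc 0 b, HasDerivAt g (g₁ v) v)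
    (h_bound : ∀ v ∈ Set.Icc 0 b, ‖g₁ v‖ ≤ C * v ^ k) {v : ℝ} (hv : v ∈ Set.Icc 0 b) :
    ‖g v - g 0‖ ≤ C * v ^ (k + 1) := by
  have h_sub : Set.Icc 0 v ⊆ Set.Icc 0 b := Set.Icc_subset_Icc_right hv.2
  calc ‖g v - g 0‖ ≤ C * v ^ k * (v - 0) :=
        norm_image_sub_le_of_norm_deriv_le_segment'
          (fun u hu ↦ (hg u (h_sub hu)).hasDerivWithinAt)
          (fun u hu ↦ (h_bound u (h_sub (Set.Ico_subset_Icc_self hu))).trans <|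
            mul_le_mul_of_nonneg_left (pow_le_pow_left₀ hu.1 hu.2.le k) hC)
          v (Set.right_mem_Icc.2 hv.1)
    _ = C * v ^ (k + 1) := by ring

lemma norm_sub_taylor_two_le (hg : ∀ v ∈ Set.Icc 0 b, HasDerivAt g (g₁ v) v)
    (hg₁ : ∀ v ∈ Set.Icc 0 b, HasDerivAt g₁ (g₂ v) v)
    (hg₂ : ∀ v ∈ Set.Icc 0 b, HasDerivAt g₂ (g₃ v) v)
    (h_bound : ∀ v ∈ Set.Icc 0 b, ‖g₃ v‖ ≤ C) {v : ℝ} (hv : v ∈ Set.Icc 0 b) :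
    ‖g v - g 0 - v • g₁ 0 - (v ^ 2 / 2) • g₂ 0‖ ≤ C * v ^ 3 := by
  have hC : 0 ≤ C := (norm_nonneg _).trans (h_bound v hv)
  have h₂ : ∀ u ∈ Set.Icc 0 b, ‖g₂ u - g₂ 0‖ ≤ C * u ^ 1 := fun u hu ↦
    norm_sub_le_mul_pow_succ 0 hC hg₂ (by simpa using h_bound) hu
  have h₁ : ∀ u ∈ Set.Icc 0 b, ‖g₁ u - g₁ 0 - u • g₂ 0‖ ≤ C * u ^ 2 := fun u hu ↦ by
    have h_deriv : ∀ t ∈ Set.Icc 0 b, HasDerivAt (fun t ↦ g₁ t - t • g₂ 0) (g₂ t - g₂ 0) t :=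
      fun t ht ↦ by simpa using (hg₁ t ht).fun_sub ((hasDerivAt_id t).smul_const (g₂ 0))
    simpa [sub_right_comm] using norm_sub_le_mul_pow_succ 1 hC h_deriv h₂ hu
  have h_deriv : ∀ t ∈ Set.Icc 0 b, HasDerivAt (fun t ↦ g t - t • g₁ 0 - (t ^ 2 / 2) • g₂ 0)
      (g₁ t - g₁ 0 - t • g₂ 0) t := fun t ht ↦ by
    have h_sq : HasDerivAt (fun t : ℝ ↦ t ^ 2 / 2) t t := by
      simpa using ((hasDerivAt_id t).pow 2).div_const 2
    simpa using ((hg t ht).fun_sub ((hasDerivAt_id t).smul_const (g₁ 0))).fun_sub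
      (h_sq.smul_const (g₂ 0))
  simpa [sub_right_comm] using norm_sub_le_mul_pow_succ 2 hC h_deriv h₁ hv

end SegmentTaylor

/-! ### The Airy integral on horizontal lines -/

/-- The integrand `exp (i (t³ / 3 + t x))` of the Airy integral, as an entire function of `t`, so
that the contour of integration can be moved into the upper half-plane. -/
def airyKernel (x : ℝ) (t : ℂ) : ℂ := Complex.exp (Complex.I * (t ^ 3 / 3 + t * x))

lemma norm_airyKernel (x u v : ℝ) :
    ‖airyKernel x (u + v * Complex.I)‖ = Real.exp (v ^ 3 / 3 - v * x) * Real.exp (-v * u ^ 2) := by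
  have h_exponent : Complex.I * ((u + v * Complex.I) ^ 3 / 3 + (u + v * Complex.I) * x) =
      ((v ^ 3 / 3 - v * x + -v * u ^ 2 : ℝ) : ℂ) +
        ((u ^ 3 / 3 - u * v ^ 2 + u * x : ℝ) : ℂ) * Complex.I := by
    push_cast
    linear_combination ((u : ℂ) ^ 2 * v + u * v ^ 2 * Complex.I +
      (v : ℂ) ^ 3 * (Complex.I ^ 2 - 1) / 3 + v * x) * Complex.I_sq
  rw [airyKernel, Complex.norm_exp, h_exponent, ← Real.exp_add, Complex.add_re, Complex.ofReal_re,
    Complex.re_ofReal_mul, Complex.I_re, mul_zero, add_zero]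

lemma continuous_airyKernel (x : ℝ) : Continuous (airyKernel x) := by
  unfold airyKernel
  fun_prop

lemma integrable_airyKernel (x : ℝ) {v : ℝ} (hv : 0 < v) :
    Integrable fun u : ℝ ↦ airyKernel x (u + v * Complex.I) :=
  ((integrable_exp_neg_mul_sq hv).const_mul _).mono'
    ((continuous_airyKernel x).comp (by fun_prop)).aestronglyMeasurable
    (ae_of_all _ fun u ↦ (norm_airyKernel x u v).le)

lemma tendsto_intervalIntegral_airyKernel_cocompact (x h : ℝ) (hh : 0 ≤ h) :
    Tendsto (fun u : ℝ ↦ ∫ v in (0 : ℝ)..h, airyKernel x (u + v * Complex.I))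
      (cocompact ℝ) (𝓝 0) := by
  rw [← intervalIntegral.integral_zero (E := ℂ) (a := 0) (b := h) (μ := volume)]
  have : (cocompact ℝ).IsCountablyGenerated := by
    rw [cocompact_eq_atBot_atTop]
    infer_instance
  refine intervalIntegral.tendsto_integral_filter_of_dominated_convergence
    (fun v ↦ Real.exp (v ^ 3 / 3 - v * x)) (.of_forall fun u ↦
      ((continuous_airyKernel x).comp (by fun_prop)).aestronglyMeasurable) ?_
    (Continuous.intervalIntegrable (by fun_prop) _ _) ?_
  · refine .of_forall fun u ↦ ae_of_all _ fun v hv ↦ ?_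
    rw [Set.uIoc_of_le hh] at hv
    rw [norm_airyKernel]
    exact mul_le_of_le_one_right (Real.exp_pos _).le
      (Real.exp_le_one_iff.2 (by nlinarith [sq_nonneg u, hv.1]))
  · refine ae_of_all _ fun v hv ↦ ?_
    rw [Set.uIoc_of_le hh] at hv
    rw [tendsto_zero_iff_norm_tendsto_zero]
    simp only [norm_airyKernel]
    rw [← mul_zero (Real.exp (v ^ 3 / 3 - v * x))]
    have h_sq : Tendsto (fun u : ℝ ↦ u ^ 2) (cocompact ℝ) atTop := by
      simpa only [Function.comp_def, Real.norm_eq_abs, sq_abs] using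
        (tendsto_pow_atTop two_ne_zero).comp (tendsto_norm_cocompact_atTop (E := ℝ))
    exact (Real.tendsto_exp_atBot.comp
      (h_sq.const_mul_atTop_of_neg (neg_lt_zero.2 hv.1))).const_mul _

lemma integral_airyKernel (x : ℝ) {v : ℝ} (hv : 0 < v) :
    ∫ u : ℝ, airyKernel x (u + v * Complex.I) = 2 * Real.pi * Ai x := by
  have h_line : Tendsto (fun R : ℝ ↦ ∫ u in (-R)..R, airyKernel x (u + v * Complex.I)) atTop
      (𝓝 (∫ u : ℝ, airyKernel x (u + v * Complex.I))) :=
    intervalIntegral_tendsto_integral (integrable_airyKernel x hv) tendsto_neg_atTop_atBot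
      tendsto_id
  have h_sides := tendsto_intervalIntegral_airyKernel_cocompact x v hv.le
  have h_right := (h_sides.comp (tendsto_id.mono_right atTop_le_cocompact)).const_mul Complex.I
  have h_left := (h_sides.comp
    (tendsto_neg_atTop_atBot.mono_right atBot_le_cocompact)).const_mul Complex.I
  have h_contour : Tendsto (fun R : ℝ ↦ ∫ t in (-R)..R, airyKernel x t) atTop
      (𝓝 (∫ u : ℝ, airyKernel x (u + v * Complex.I))) := by
    refine (((h_line.sub h_right).add h_left).congr fun R ↦ ?_).trans_eq (by simp)
    have h_rect := Complex.integral_boundary_rect_eq_zero_of_differentiableOn (airyKernel x)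
      (-R : ℝ) (R + v * Complex.I)
      (Differentiable.differentiableOn (by unfold airyKernel; fun_prop))
    simp only [Complex.ofReal_re, Complex.ofReal_im, Complex.add_re, Complex.add_im,
      Complex.re_ofReal_mul, Complex.im_ofReal_mul, Complex.I_re, Complex.I_im, mul_zero, mul_one,
      add_zero, zero_add, Complex.ofReal_zero, zero_mul, smul_eq_mul] at h_rect
    simp only [Function.comp_apply, id_eq]
    linear_combination -h_rect
  have h_pi : (Real.pi : ℂ) ≠ 0 := Complex.ofReal_ne_zero.2 Real.pi_ne_zero
  unfold airyKernel at h_contour ⊢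
  rw [Ai, h_contour.limUnder_eq]
  push_cast
  field_simp

section CubicPhase

variable {c β m h : ℝ}

lemma exp_cubic_eq_airyKernel (hβ : β ≠ 0) (hcβ : c * β ^ 3 = 1) (hm : m ≠ 0) (D s : ℝ) :
    Complex.exp (Complex.I * (m ^ 3 * (c * (s + h * Complex.I) ^ 3 / 3) +
        D * (s + h * Complex.I))) =
      airyKernel (β / m * D) (((m / β * s : ℝ) : ℂ) + ((m / β * h : ℝ) : ℂ) * Complex.I) := by
  have hβ' : (β : ℂ) ≠ 0 := Complex.ofReal_ne_zero.2 hβ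
  have hm' : (m : ℂ) ≠ 0 := Complex.ofReal_ne_zero.2 hm
  have hcβ' : (c : ℂ) * (β : ℂ) ^ 3 = 1 := by exact_mod_cast hcβ
  have h_scale : ((m / β * s : ℝ) : ℂ) + ((m / β * h : ℝ) : ℂ) * Complex.I =
      m / β * (s + h * Complex.I) := by
    push_cast
    ring
  rw [h_scale, airyKernel]
  generalize (s + h * Complex.I : ℂ) = w
  push_cast
  congr 2
  field_simp
  linear_combination (m : ℂ) ^ 3 * w ^ 3 * hcβ'

lemma integrable_exp_cubic (hβ : 0 < β) (hcβ : c * β ^ 3 = 1) (hm : 0 < m) (hh : 0 < h) (D : ℝ) :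
    Integrable fun s : ℝ ↦ Complex.exp (Complex.I * (m ^ 3 * (c * (s + h * Complex.I) ^ 3 / 3) +
        D * (s + h * Complex.I))) := by
  simp only [exp_cubic_eq_airyKernel hβ.ne' hcβ hm.ne']
  exact (integrable_airyKernel _ (by positivity)).comp_mul_left' (by positivity)

lemma integral_exp_cubic (hβ : 0 < β) (hcβ : c * β ^ 3 = 1) (hm : 0 < m) (hh : 0 < h) (D : ℝ) :
    ∫ s : ℝ, Complex.exp (Complex.I * (m ^ 3 * (c * (s + h * Complex.I) ^ 3 / 3) +
        D * (s + h * Complex.I))) = 2 * Real.pi * (β / m) * Ai (β / m * D) := by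
  simp only [exp_cubic_eq_airyKernel hβ.ne' hcβ hm.ne']
  rw [Measure.integral_comp_mul_left
      (fun u : ℝ ↦ airyKernel (β / m * D) (u + ((m / β * h : ℝ) : ℂ) * Complex.I)) (m / β),
    integral_airyKernel _ (by positivity), inv_div, abs_of_pos (by positivity), Complex.real_smul]
  push_cast
  ring

end CubicPhase

/-! ### Oscillatory integrals with a degenerate critical point -/

/-- A phase on the rectangle `[-r, r] × [0, ρ]` with the degenerate critical point `0`: to leading
order it is the Airy phase `c w³ / 3`, and its imaginary part is so large that `exp (i m³ q)`
decays like a Gaussian along horizontal lines at height of order `1 / m`. -/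
structure IsAiryPhase (q : ℂ → ℂ) (c r ρ : ℝ) : Prop where
  continuousOn : ContinuousOn q (Set.Icc (-r) r ×ℂ Set.Icc 0 ρ)
  isBigO_sub_cubic : (fun w ↦ q w - c * w ^ 3 / 3) =O[𝓝 0] fun w ↦ w ^ 4
  exists_le_im : ∃ κ > 0, ∃ A, ∀ w ∈ Set.Icc (-r) r ×ℂ Set.Icc 0 ρ,
    κ * w.im * w.re ^ 2 - A * w.im ^ 3 ≤ (q w).im

lemma isCompact_box (r ρ : ℝ) : IsCompact (Set.Icc (-r) r ×ℂ Set.Icc 0 ρ) :=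
  isCompact_Icc.reProdIm isCompact_Icc

/-- The oscillating factor `exp (i (m³ q(w) + D w))`. -/
def phaseExp (q : ℂ → ℂ) (m D : ℝ) (w : ℂ) : ℂ := Complex.exp (Complex.I * (m ^ 3 * q w + D * w))

/-- The point above `s` on the horizontal line of height `β / m`, the scale on which `m³ w³` is
bounded. -/
def airyLine (β m s : ℝ) : ℂ := s + (β / m : ℝ) * Complex.I

lemma airyLine_re (β m s : ℝ) : (airyLine β m s).re = s := by simp [airyLine]

lemma airyLine_im (β m s : ℝ) : (airyLine β m s).im = β / m := by
  rw [airyLine, Complex.add_im, Complex.ofReal_im, Complex.im_ofReal_mul, Complex.I_im, mul_one,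
    zero_add]

lemma airyLine_mem_box {β m s r ρ : ℝ} (hβm : 0 ≤ β / m) (hβρ : β / m ≤ ρ)
    (hs : s ∈ Set.Icc (-r) r) : airyLine β m s ∈ Set.Icc (-r) r ×ℂ Set.Icc 0 ρ := by
  rw [Complex.mem_reProdIm, airyLine_re, airyLine_im]
  exact ⟨hs, hβm, hβρ⟩

lemma continuous_airyLine (β m : ℝ) : Continuous (airyLine β m) := by
  unfold airyLine
  fun_prop

section AiryLine

variable {β m s : ℝ}

lemma pow_three_mul_norm_airyLine_pow_four (hm : 0 < m) :
    m ^ 3 * ‖airyLine β m s‖ ^ 4 = ((m * s) ^ 2 + β ^ 2) ^ 2 / m := by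
  have h_norm : ‖airyLine β m s‖ ^ 2 = s ^ 2 + (β / m) ^ 2 := by
    rw [Complex.sq_norm, Complex.normSq_apply, airyLine_re, airyLine_im]
    ring
  rw [show ‖airyLine β m s‖ ^ 4 = (‖airyLine β m s‖ ^ 2) ^ 2 by ring, h_norm]
  field_simp

lemma norm_airyLine_le (hβ : 0 < β) (hm : 0 < m) :
    ‖airyLine β m s‖ ≤ (β ^ 3)⁻¹ * (m ^ 3 * ‖airyLine β m s‖ ^ 4) := by
  have h_im : β ≤ m * ‖airyLine β m s‖ := by
    have := Complex.abs_im_le_norm (airyLine β m s)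
    rw [airyLine_im, abs_of_pos (by positivity), div_le_iff₀' hm] at this
    exact this
  have h_cube : 1 ≤ (β ^ 3)⁻¹ * (m * ‖airyLine β m s‖) ^ 3 := by
    rw [inv_mul_eq_div, one_le_div (by positivity)]
    gcongr
  calc ‖airyLine β m s‖ ≤ (β ^ 3)⁻¹ * (m * ‖airyLine β m s‖) ^ 3 * ‖airyLine β m s‖ :=
        le_mul_of_one_le_left (norm_nonneg _) h_cube
    _ = _ := by ring

lemma re_exponent_le {z : ℂ} {D L κ A : ℝ} (hβ : 0 < β) (hm : 0 < m) (hD : |D| ≤ L * m)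
    (hz : κ * (airyLine β m s).im * (airyLine β m s).re ^ 2 - A * (airyLine β m s).im ^ 3 ≤ z.im) :
    (Complex.I * (m ^ 3 * z + D * airyLine β m s)).re ≤
      A * β ^ 3 + L * β + -(κ * β) * (m * s) ^ 2 := by
  rw [airyLine_re, airyLine_im] at hz
  have h_re : (Complex.I * (m ^ 3 * z + D * airyLine β m s)).re =
      -(m ^ 3 * z.im + D * (β / m)) := by
    rw [Complex.I_mul_re, Complex.add_im, Complex.im_ofReal_mul, airyLine_im, ← Complex.ofReal_pow,
      Complex.im_ofReal_mul]
  have h_phase := mul_le_mul_of_nonneg_left hz (pow_pos hm 3).le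
  have h_scale : m ^ 3 * (κ * (β / m) * s ^ 2 - A * (β / m) ^ 3) =
      κ * β * (m * s) ^ 2 - A * β ^ 3 := by
    field_simp
  have h_linear : -(L * β) ≤ D * (β / m) := by
    calc -(L * β) = -(L * m) * (β / m) := by field_simp
      _ ≤ D * (β / m) := by gcongr; exact (abs_le.1 hD).1
  linarith

end AiryLine

section PhaseExp

variable {q p : ℂ → ℂ} {m D K M : ℝ} {g h w : ℂ}

lemma norm_mul_phaseExp_sub_le {B₁ B₂ : ℝ} (hm : 0 < m) (hB₁ : 0 ≤ B₁)
    (hq : (Complex.I * (m ^ 3 * q w + D * w)).re ≤ M)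
    (hp : (Complex.I * (m ^ 3 * p w + D * w)).re ≤ M) (h_amp : ‖g - h‖ ≤ B₁ * ‖w‖)
    (h_phase : ‖q w - p w‖ ≤ B₂ * ‖w‖ ^ 4) (hK : ‖w‖ ≤ K * (m ^ 3 * ‖w‖ ^ 4)) :
    ‖g * phaseExp q m D w - h * phaseExp p m D w‖ ≤
      (B₁ * K + ‖h‖ * B₂) * (m ^ 3 * ‖w‖ ^ 4) * Real.exp M := by
  refine (norm_mul_exp_sub_mul_exp_le hq hp).trans
    (mul_le_mul_of_nonneg_right ?_ (Real.exp_pos _).le)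
  have h_diff : ‖Complex.I * (m ^ 3 * q w + D * w) - Complex.I * (m ^ 3 * p w + D * w)‖ =
      m ^ 3 * ‖q w - p w‖ := by
    rw [← mul_sub, add_sub_add_right_eq_sub, ← mul_sub, norm_mul, norm_mul, Complex.norm_I, one_mul,
      norm_pow, Complex.norm_of_nonneg hm.le]
  calc _ ≤ B₁ * (K * (m ^ 3 * ‖w‖ ^ 4)) + ‖h‖ * (m ^ 3 * (B₂ * ‖w‖ ^ 4)) := by
        rw [h_diff]
        gcongr
        exact h_amp.trans (mul_le_mul_of_nonneg_left hK hB₁)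
    _ = _ := by ring

lemma norm_mul_phaseExp_le {r : ℝ} (hr : 0 < r) (hp : (Complex.I * (m ^ 3 * p w + D * w)).re ≤ M)
    (hw : r ≤ ‖w‖) (hK : ‖w‖ ≤ K * (m ^ 3 * ‖w‖ ^ 4)) :
    ‖h * phaseExp p m D w‖ ≤ ‖h‖ * (r⁻¹ * K) * (m ^ 3 * ‖w‖ ^ 4) * Real.exp M := by
  have h_one : 1 ≤ r⁻¹ * (K * (m ^ 3 * ‖w‖ ^ 4)) := by
    rw [inv_mul_eq_div, one_le_div hr]
    exact hw.trans hK
  rw [norm_mul, phaseExp, Complex.norm_exp]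
  calc ‖h‖ * Real.exp _ ≤ ‖h‖ * (r⁻¹ * (K * (m ^ 3 * ‖w‖ ^ 4))) * Real.exp M := by
        gcongr
        exact le_mul_of_one_le_right (norm_nonneg h) h_one
    _ = _ := by ring

end PhaseExp

lemma le_im_cubic {c κ A : ℝ} (hκ : κ ≤ c) (hA : c / 3 ≤ A) {w : ℂ} (hw : 0 ≤ w.im) :
    κ * w.im * w.re ^ 2 - A * w.im ^ 3 ≤ (c * w ^ 3 / 3 : ℂ).im := by
  have h_im : (c * w ^ 3 / 3 : ℂ).im = c * (w.im * w.re ^ 2) - c / 3 * w.im ^ 3 := by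
    conv_lhs => rw [← Complex.re_add_im w]
    rw [mul_div_assoc, Complex.im_ofReal_mul, show (3 : ℂ) = ((3 : ℝ) : ℂ) by simp,
      Complex.div_ofReal_im]
    simp [pow_succ]
    ring
  have h_quad := mul_le_mul_of_nonneg_right hκ (mul_nonneg hw (sq_nonneg w.re))
  have h_cube := mul_le_mul_of_nonneg_right hA (pow_nonneg hw 3)
  rw [h_im]
  linarith

lemma integral_Icc_indicator_eq {f : ℝ → ℂ} (hr : 0 ≤ r) :
    ∫ s, (Set.Icc (-r) r).indicator f s = ∫ s in (-r)..r, f s := by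
  rw [integral_indicator measurableSet_Icc, integral_Icc_eq_integral_Ioc,
    intervalIntegral.integral_of_le (by linarith)]

namespace IsAiryPhase

variable {q G : ℂ → ℂ} {c r ρ β : ℝ}

lemma exists_le_im_and_cubic (hq : IsAiryPhase q c r ρ) (hc : 0 < c) :
    ∃ κ > 0, ∃ A,
      (∀ w ∈ Set.Icc (-r) r ×ℂ Set.Icc 0 ρ, κ * w.im * w.re ^ 2 - A * w.im ^ 3 ≤ (q w).im) ∧
      ∀ w : ℂ, 0 ≤ w.im → κ * w.im * w.re ^ 2 - A * w.im ^ 3 ≤ (c * w ^ 3 / 3 : ℂ).im := by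
  obtain ⟨κ, hκ, A, hA⟩ := hq.exists_le_im
  refine ⟨min κ c, lt_min hκ hc, max A (c / 3), fun w hw ↦ (hA w hw).trans' ?_,
    fun w hw ↦ le_im_cubic (min_le_right _ _) (le_max_right _ _) hw⟩
  have h_im : 0 ≤ w.im := hw.2.1
  gcongr
  exacts [min_le_left _ _, le_max_left _ _]

lemma exists_norm_sub_cubic_le (hq : IsAiryPhase q c r ρ) : ∃ B, 0 ≤ B ∧
    ∀ w ∈ Set.Icc (-r) r ×ℂ Set.Icc 0 ρ, ‖q w - c * w ^ 3 / 3‖ ≤ B * ‖w‖ ^ 4 := by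
  have h_cont : ContinuousOn (fun w ↦ q w - c * w ^ 3 / 3) (Set.Icc (-r) r ×ℂ Set.Icc 0 ρ) :=
    hq.continuousOn.sub (by fun_prop)
  simpa only [norm_pow] using exists_norm_le_of_isBigO_nhds (isCompact_box r ρ) h_cont
    (by fun_prop) (fun w _ hw ↦ pow_ne_zero 4 hw) hq.isBigO_sub_cubic

lemma exists_norm_integrand_sub_le_weight (hq : IsAiryPhase q c r ρ) (hr : 0 < r) (hβ : 0 < β)
    (hc : 0 < c) (hG : ContinuousOn G (Set.Icc (-r) r ×ℂ Set.Icc 0 ρ))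
    (hG₀ : (fun w ↦ G w - G 0) =O[𝓝 0] fun w ↦ w) (L : ℝ) :
    ∃ C, 0 ≤ C ∧ ∃ κ > 0, ∀ m > 0, β / m ≤ ρ → ∀ D : ℝ, |D| ≤ L * m → ∀ s : ℝ,
      ‖(Set.Icc (-r) r).indicator
            (fun s ↦ G (airyLine β m s) * phaseExp q m D (airyLine β m s)) s -
          G 0 * phaseExp (fun w ↦ c * w ^ 3 / 3) m D (airyLine β m s)‖ ≤
        C * (m ^ 3 * ‖airyLine β m s‖ ^ 4) * Real.exp (-κ * (m * s) ^ 2) := by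
  obtain ⟨κ, hκ, A, h_im, h_im_cubic⟩ := hq.exists_le_im_and_cubic hc
  obtain ⟨B₁, hB₁, hG_le⟩ := exists_norm_le_of_isBigO_nhds (isCompact_box r ρ)
    (hG.fun_sub continuousOn_const) (continuousOn_id' _) (fun _ _ hw ↦ hw) hG₀
  obtain ⟨B₂, hB₂, hq_le⟩ := hq.exists_norm_sub_cubic_le
  refine ⟨(B₁ * (β ^ 3)⁻¹ + ‖G 0‖ * B₂ + ‖G 0‖ * (r⁻¹ * (β ^ 3)⁻¹)) * Real.exp (A * β ^ 3 + L * β),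
    by positivity, κ * β, by positivity, fun m hm hmρ D hD s ↦ ?_⟩
  have h_norm := norm_airyLine_le (s := s) hβ hm
  have h_re_cubic := re_exponent_le hβ hm hD
    (h_im_cubic (airyLine β m s) (by rw [airyLine_im]; positivity))
  rw [mul_right_comm _ (Real.exp _), mul_assoc _ (Real.exp _), ← Real.exp_add]
  by_cases hs : s ∈ Set.Icc (-r) r
  · have hw := airyLine_mem_box (by positivity) hmρ hs
    rw [Set.indicator_of_mem hs]
    have h_re := re_exponent_le hβ hm hD (h_im _ hw)
    refine (norm_mul_phaseExp_sub_le (p := fun w ↦ c * w ^ 3 / 3) hm hB₁ h_re h_re_cubic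
      (hG_le _ hw) (hq_le _ hw) h_norm).trans ?_
    gcongr ?_ * _ * _
    exact le_add_of_nonneg_right (by positivity)
  · have h_far : r ≤ ‖airyLine β m s‖ := by
      have h_re := Complex.abs_re_le_norm (airyLine β m s)
      rw [Set.mem_Icc, ← abs_le, not_le] at hs
      rw [airyLine_re] at h_re
      exact hs.le.trans h_re
    rw [Set.indicator_of_notMem hs, zero_sub, norm_neg]
    refine (norm_mul_phaseExp_le (p := fun w ↦ c * w ^ 3 / 3) hr h_re_cubic h_far h_norm).trans ?_
    gcongr ?_ * _ * _
    exact le_add_of_nonneg_left (by positivity)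

lemma exists_norm_integrand_sub_le (hq : IsAiryPhase q c r ρ) (hr : 0 < r) (hβ : 0 < β)
    (hc : 0 < c) (hG : ContinuousOn G (Set.Icc (-r) r ×ℂ Set.Icc 0 ρ))
    (hG₀ : (fun w ↦ G w - G 0) =O[𝓝 0] fun w ↦ w) (L : ℝ) :
    ∃ C, ∃ κ > 0, ∀ m > 0, β / m ≤ ρ → ∀ D : ℝ, |D| ≤ L * m → ∀ s : ℝ,
      ‖(Set.Icc (-r) r).indicator
            (fun s ↦ G (airyLine β m s) * phaseExp q m D (airyLine β m s)) s -
          G 0 * phaseExp (fun w ↦ c * w ^ 3 / 3) m D (airyLine β m s)‖ ≤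
        C / m * Real.exp (-κ * (m * s) ^ 2) := by
  obtain ⟨C, hC, κ, hκ, h_weight⟩ := hq.exists_norm_integrand_sub_le_weight hr hβ hc hG hG₀ L
  refine ⟨C * (2 * (2 / κ) ^ 2 * Real.exp (κ / 2 * β ^ 2)), κ / 2, by positivity,
    fun m hm hmρ D hD s ↦ (h_weight m hm hmρ D hD s).trans ?_⟩
  have h_gauss := pow_mul_exp_neg_le 2 hκ (m * s) β
  rw [pow_three_mul_norm_airyLine_pow_four hm]
  calc C * (((m * s) ^ 2 + β ^ 2) ^ 2 / m) * Real.exp (-κ * (m * s) ^ 2)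
      = C / m * (((m * s) ^ 2 + β ^ 2) ^ 2 * Real.exp (-κ * (m * s) ^ 2)) := by ring
    _ ≤ C / m * (Nat.factorial 2 * (2 / κ) ^ 2 * Real.exp (κ / 2 * β ^ 2) *
          Real.exp (-(κ / 2) * (m * s) ^ 2)) := by gcongr
    _ = _ := by
        push_cast [Nat.factorial]
        ring

lemma norm_intervalIntegral_sub_Ai_le (hq : IsAiryPhase q c r ρ) (hr : 0 < r) (hβ : 0 < β)
    (hcβ : c * β ^ 3 = 1) (hG : ContinuousOn G (Set.Icc (-r) r ×ℂ Set.Icc 0 ρ))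
    (hG₀ : (fun w ↦ G w - G 0) =O[𝓝 0] fun w ↦ w) (L : ℝ) :
    ∃ C, ∀ m > 0, β / m ≤ ρ → ∀ D : ℝ, |D| ≤ L * m →
      ‖(∫ s in (-r)..r, G (airyLine β m s) * phaseExp q m D (airyLine β m s)) -
          G 0 * (2 * Real.pi * (β / m) * Ai (β / m * D))‖ ≤ C * (m ^ 2)⁻¹ := by
  have hc : 0 < c := pos_of_mul_pos_left (hcβ ▸ one_pos) (pow_pos hβ 3).le
  obtain ⟨C, κ, hκ, h_le⟩ := hq.exists_norm_integrand_sub_le hr hβ hc hG hG₀ L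
  refine ⟨C * Real.sqrt (Real.pi / κ), fun m hm hmρ D hD ↦ ?_⟩
  have h_gauss (s : ℝ) : Real.exp (-κ * (m * s) ^ 2) = Real.exp (-(κ * m ^ 2) * s ^ 2) := by
    ring_nf
  have h_line : Set.MapsTo (airyLine β m) (Set.Icc (-r) r) (Set.Icc (-r) r ×ℂ Set.Icc 0 ρ) :=
    fun s hs ↦ airyLine_mem_box (by positivity) hmρ hs
  have h_cont : ContinuousOn (fun s ↦ G (airyLine β m s) * phaseExp q m D (airyLine β m s))
      (Set.Icc (-r) r) := by
    have h_airy := (continuous_airyLine β m).continuousOn (s := Set.Icc (-r) r)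
    have h_phase := hq.continuousOn.comp h_airy h_line
    unfold phaseExp
    exact (hG.comp h_airy h_line).mul (ContinuousOn.cexp (continuousOn_const.mul
      ((continuousOn_const.mul h_phase).add (continuousOn_const.mul h_airy))))
  have h_int := (integrable_indicator_iff (μ := volume) measurableSet_Icc).2
    (h_cont.integrableOn_compact isCompact_Icc)
  have h_int_cubic := (integrable_exp_cubic hβ hcβ hm (div_pos hβ hm) D).const_mul (G 0)
  rw [← integral_exp_cubic hβ hcβ hm (div_pos hβ hm) D, ← integral_const_mul,
    ← integral_Icc_indicator_eq hr.le, ← integral_sub h_int h_int_cubic]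
  calc _ ≤ ∫ s : ℝ, C / m * Real.exp (-(κ * m ^ 2) * s ^ 2) :=
        norm_integral_le_of_norm_le ((integrable_exp_neg_mul_sq (by positivity)).const_mul _)
          (ae_of_all _ fun s ↦ h_gauss s ▸ h_le m hm hmρ D hD s)
    _ = C * Real.sqrt (Real.pi / κ) * (m ^ 2)⁻¹ := by
        rw [integral_const_mul, integral_gaussian, ← div_div, Real.sqrt_div' _ (sq_nonneg m),
          Real.sqrt_sq hm.le]
        ring

theorem intervalIntegral_sub_Ai_isBigO (hq : IsAiryPhase q c r ρ) (hr : 0 < r) (hρ : 0 < ρ)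
    (hβ : 0 < β) (hcβ : c * β ^ 3 = 1) (hG : ContinuousOn G (Set.Icc (-r) r ×ℂ Set.Icc 0 ρ))
    (hG₀ : (fun w ↦ G w - G 0) =O[𝓝 0] fun w ↦ w) {ι : Type*} {l : Filter ι} {m D : ι → ℝ}
    (hm : Tendsto m l atTop) (hD : D =O[l] m) :
    (fun i ↦ (∫ s in (-r)..r,
          G (airyLine β (m i) s) * phaseExp q (m i) (D i) (airyLine β (m i) s)) -
        G 0 * (2 * Real.pi * (β / m i) * Ai (β / m i * D i))) =O[l] fun i ↦ (m i ^ 2)⁻¹ := by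
  obtain ⟨L, hL⟩ := hD.bound
  obtain ⟨C, hC⟩ := hq.norm_intervalIntegral_sub_Ai_le hr hβ hcβ hG hG₀ L
  refine IsBigO.of_bound C ?_
  filter_upwards [hL, hm.eventually_gt_atTop 0,
    (hm.const_div_atTop β).eventually_le_const hρ] with i hi_D hi_pos hi_height
  rw [Real.norm_of_nonneg (by positivity)]
  exact hC (m i) hi_pos hi_height (D i) (by simpa [abs_of_pos hi_pos] using hi_D)

end IsAiryPhase

/-! ### The phase of the walk -/

lemma isBigO_pow_succ_of_hasDerivAt {𝕜 E : Type*} [RCLike 𝕜] [NormedAddCommGroup E]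
    [NormedSpace 𝕜 E] {f f' : 𝕜 → E} {k : ℕ} (hf : ∀ᶠ w in 𝓝 0, HasDerivAt f (f' w) w)
    (hf₀ : f 0 = 0) (hf' : f' =O[𝓝 0] fun w ↦ w ^ k) : f =O[𝓝 0] fun w ↦ w ^ (k + 1) := by
  obtain ⟨C, hC, h_bound⟩ := hf'.exists_pos
  obtain ⟨δ, hδ, h_ball⟩ := Metric.eventually_nhds_iff_ball.1 (hf.and h_bound.bound)
  refine IsBigO.of_bound C ?_
  filter_upwards [Metric.ball_mem_nhds 0 hδ] with w hw
  have h_sub : Metric.closedBall 0 ‖w‖ ⊆ Metric.ball (0 : 𝕜) δ :=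
    Metric.closedBall_subset_ball (by simpa using hw)
  have h_mvt := (convex_closedBall (0 : 𝕜) ‖w‖).norm_image_sub_le_of_norm_hasDerivWithin_le
    (fun x hx ↦ (h_ball x (h_sub hx)).1.hasDerivWithinAt) (C := C * ‖w‖ ^ k) (fun x hx ↦ ?_)
    (Metric.mem_closedBall_self (norm_nonneg w)) (y := w) (by simp)
  · simpa [hf₀, pow_succ, mul_assoc] using h_mvt
  · refine (h_ball x (h_sub hx)).2.trans ?_
    rw [norm_pow]
    have : ‖x‖ ≤ ‖w‖ := by simpa using hx
    gcongr

/-- The radicand `1 - α² sin² w` of the dispersion relation. -/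
def dispRadicand (α : ℝ) (w : ℂ) : ℂ := 1 - (α * Complex.sin w) ^ 2

/-- The function `S(w) = √(1 - α² sin² w)`, with the principal branch of the root; the eigenvalues
of the walk are `α sin w ± i S(w)`. -/
def dispRoot (α : ℝ) (w : ℂ) : ℂ := (dispRadicand α w).sqrt

/-- The function `S(w) - iα sin w`, that is `exp (-i arcsin (α sin w))`. -/
def dispFactor (α : ℝ) (w : ℂ) : ℂ := dispRoot α w - Complex.I * (α * Complex.sin w)

/-- The phase `q(w) = αw - arcsin (α sin w)` of the walk; the arcsine is written as a logarithm. -/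
def walkPhase (α : ℝ) (w : ℂ) : ℂ := α * w - Complex.I * Complex.log (dispFactor α w)

/-- The derivative `q'` of the phase of the walk. -/
def walkPhaseDeriv (α : ℝ) (w : ℂ) : ℂ := α - α * Complex.cos w / dispRoot α w

/-- The second derivative `q''` of the phase of the walk. -/
def walkPhaseDeriv₂ (α : ℝ) (w : ℂ) : ℂ := α * (1 - α ^ 2) * Complex.sin w / dispRoot α w ^ 3

/-- The third derivative `q'''` of the phase of the walk. -/
def walkPhaseDeriv₃ (α : ℝ) (w : ℂ) : ℂ :=
  α * (1 - α ^ 2) * Complex.cos w * (1 + 2 * (α * Complex.sin w) ^ 2) / dispRoot α w ^ 5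

section Domain

variable {α : ℝ} {w : ℂ}

lemma continuous_dispRadicand (α : ℝ) : Continuous (dispRadicand α) := by
  unfold dispRadicand
  fun_prop

lemma exists_strip_dispRadicand_re_pos (hα : |α| < 1) :
    ∃ ρ > 0, ∀ w : ℂ, w.im ∈ Set.Icc 0 ρ → 0 < (dispRadicand α w).re := by
  have h_cosh : ∀ᶠ v in 𝓝 (0 : ℝ), |α| * Real.cosh v < 1 :=
    (continuous_const.mul Real.continuous_cosh).continuousAt.eventually_lt_const (by simpa using hα)
  obtain ⟨ρ, hρ, h_ball⟩ := Metric.nhds_basis_closedBall.eventually_iff.1 h_cosh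
  refine ⟨ρ, hρ, fun w hw ↦ ?_⟩
  have h_norm : ‖α * Complex.sin w‖ < 1 := by
    rw [norm_mul, Complex.norm_real, Real.norm_eq_abs]
    refine (mul_le_mul_of_nonneg_left (norm_sin_le_cosh_im w) (abs_nonneg α)).trans_lt (h_ball ?_)
    simpa [abs_of_nonneg hw.1] using hw.2
  have h_re := Complex.re_le_norm ((α * Complex.sin w) ^ 2)
  have h_sq : ‖(α * Complex.sin w) ^ 2‖ < 1 := by
    rw [norm_pow]
    exact pow_lt_one₀ (norm_nonneg _) h_norm two_ne_zero
  rw [dispRadicand, Complex.sub_re, Complex.one_re]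
  linarith

lemma dispRoot_sq (α : ℝ) (w : ℂ) : dispRoot α w ^ 2 = dispRadicand α w :=
  Complex.cpow_nat_inv_pow _ two_ne_zero

lemma dispRoot_re_pos (hw : 0 < (dispRadicand α w).re) : 0 < (dispRoot α w).re := by
  rw [dispRoot, Complex.sqrt, Complex.cpow_inv_two_re]
  exact Real.sqrt_pos.2 (by positivity)

lemma dispRoot_ne_zero (hw : 0 < (dispRadicand α w).re) : dispRoot α w ≠ 0 := fun h ↦ by
  simpa [h] using dispRoot_re_pos hw

lemma dispFactor_mul_add (α : ℝ) (w : ℂ) :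
    dispFactor α w * (dispRoot α w + Complex.I * (α * Complex.sin w)) = 1 := by
  have h_sq := dispRoot_sq α w
  rw [dispRadicand] at h_sq
  rw [dispFactor]
  linear_combination h_sq - (α * Complex.sin w) ^ 2 * Complex.I_sq

lemma dispFactor_ne_zero (α : ℝ) (w : ℂ) : dispFactor α w ≠ 0 :=
  left_ne_zero_of_mul_eq_one (dispFactor_mul_add α w)

-- The real part of `z` has the sign of that of `z + z⁻¹`, here `2 S`.
lemma dispFactor_re_pos (hw : 0 < (dispRadicand α w).re) : 0 < (dispFactor α w).re := by
  have h_inv := inv_eq_of_mul_eq_one_right (dispFactor_mul_add α w)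
  have h_sum : dispFactor α w + (dispFactor α w)⁻¹ = 2 * dispRoot α w := by
    rw [h_inv, dispFactor]
    ring
  have h_re : (dispFactor α w).re * (1 + (Complex.normSq (dispFactor α w))⁻¹) =
      2 * (dispRoot α w).re := by
    simpa [Complex.inv_re, mul_add, div_eq_mul_inv] using congrArg Complex.re h_sum
  refine pos_of_mul_pos_left (b := 1 + (Complex.normSq (dispFactor α w))⁻¹) ?_ ?_
  · rw [h_re]
    exact mul_pos two_pos (dispRoot_re_pos hw)
  · have := Complex.normSq_nonneg (dispFactor α w)
    positivity

lemma hasDerivAt_dispRoot (hw : 0 < (dispRadicand α w).re) :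
    HasDerivAt (dispRoot α) (-α ^ 2 * Complex.sin w * Complex.cos w / dispRoot α w) w := by
  have h_slit : dispRadicand α w ∈ Complex.slitPlane := Or.inl hw
  have h_radicand : HasDerivAt (dispRadicand α)
      (-(2 * (α * Complex.sin w) * (α * Complex.cos w))) w := by
    refine ((((Complex.hasDerivAt_sin w).const_mul (α : ℂ)).fun_pow 2).const_sub 1).congr_deriv ?_
    ring
  have h_cpow : dispRadicand α w ^ (-1 / 2 : ℂ) = (dispRoot α w)⁻¹ := by
    rw [dispRoot, Complex.sqrt, ← Complex.cpow_neg]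
    norm_num
  refine ((Complex.hasDerivAt_sqrt h_slit).comp w h_radicand).congr_deriv ?_
  rw [h_cpow]
  ring

lemma hasDerivAt_dispFactor (hw : 0 < (dispRadicand α w).re) :
    HasDerivAt (dispFactor α)
      (-(Complex.I * (α * Complex.cos w / dispRoot α w)) * dispFactor α w) w := by
  refine ((hasDerivAt_dispRoot hw).fun_sub
    (((Complex.hasDerivAt_sin w).const_mul (α : ℂ)).const_mul Complex.I)).congr_deriv ?_
  have := dispRoot_ne_zero hw
  rw [dispFactor]
  field_simp
  linear_combination -(α ^ 2 * Complex.sin w * Complex.cos w) * Complex.I_sq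

lemma hasDerivAt_walkPhase (hw : 0 < (dispRadicand α w).re) :
    HasDerivAt (walkPhase α) (walkPhaseDeriv α w) w := by
  refine (((hasDerivAt_id' w).const_mul (α : ℂ)).fun_sub (((hasDerivAt_dispFactor hw).clog
    (Or.inl (dispFactor_re_pos hw))).const_mul Complex.I)).congr_deriv ?_
  rw [walkPhaseDeriv, mul_div_cancel_right₀ _ (dispFactor_ne_zero α w)]
  linear_combination α * Complex.cos w / dispRoot α w * Complex.I_sq

lemma hasDerivAt_walkPhaseDeriv (hw : 0 < (dispRadicand α w).re) :
    HasDerivAt (walkPhaseDeriv α) (walkPhaseDeriv₂ α w) w := by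
  have h_ne := dispRoot_ne_zero hw
  refine ((((Complex.hasDerivAt_cos w).const_mul (α : ℂ)).fun_div
    (hasDerivAt_dispRoot hw) h_ne).const_sub (α : ℂ)).congr_deriv ?_
  have h_sq := dispRoot_sq α w
  rw [dispRadicand] at h_sq
  rw [walkPhaseDeriv₂]
  field_simp
  linear_combination α * Complex.sin w * (h_sq - α ^ 2 * Complex.sin_sq_add_cos_sq w)

lemma hasDerivAt_walkPhaseDeriv₂ (hw : 0 < (dispRadicand α w).re) :
    HasDerivAt (walkPhaseDeriv₂ α) (walkPhaseDeriv₃ α w) w := by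
  have h_ne := dispRoot_ne_zero hw
  refine (((Complex.hasDerivAt_sin w).const_mul (α * (1 - α ^ 2) : ℂ)).fun_div
    ((hasDerivAt_dispRoot hw).fun_pow 3) (pow_ne_zero 3 h_ne)).congr_deriv ?_
  have h_sq := dispRoot_sq α w
  rw [dispRadicand] at h_sq
  rw [walkPhaseDeriv₃]
  field_simp
  linear_combination α * (1 - α ^ 2) * Complex.cos w * dispRoot α w ^ 2 * h_sq

lemma differentiableAt_walkPhaseDeriv₃ (hw : 0 < (dispRadicand α w).re) :
    DifferentiableAt ℂ (walkPhaseDeriv₃ α) w := by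
  have h_root := (hasDerivAt_dispRoot hw).differentiableAt
  unfold walkPhaseDeriv₃
  exact DifferentiableAt.fun_div (by fun_prop) (h_root.fun_pow 5)
    (pow_ne_zero 5 (dispRoot_ne_zero hw))

lemma exp_walkPhase (α : ℝ) (w : ℂ) :
    Complex.exp (Complex.I * walkPhase α w) =
      Complex.exp (Complex.I * (α * w)) * dispFactor α w := by
  have h_exponent : Complex.I * walkPhase α w =
      Complex.I * (α * w) + Complex.log (dispFactor α w) := by
    rw [walkPhase]
    linear_combination -Complex.log (dispFactor α w) * Complex.I_sq
  rw [h_exponent, Complex.exp_add, Complex.exp_log (dispFactor_ne_zero α w)]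

end Domain

section RealAxis

variable {α : ℝ}

lemma dispRadicand_ofReal (α s : ℝ) :
    dispRadicand α s = ((1 - (α * Real.sin s) ^ 2 : ℝ) : ℂ) := by
  simp [dispRadicand]

lemma dispRadicand_ofReal_re_pos (hα : |α| < 1) (s : ℝ) : 0 < (dispRadicand α s).re := by
  have h_lt : |α * Real.sin s| < 1 := by
    rw [abs_mul]
    exact (mul_le_of_le_one_right (abs_nonneg α) (Real.abs_sin_le_one s)).trans_lt hα
  rw [dispRadicand_ofReal, Complex.ofReal_re, sub_pos]
  exact (sq_lt_one_iff_abs_lt_one _).2 h_lt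

lemma dispRoot_ofReal (hα : |α| < 1) (s : ℝ) :
    dispRoot α s = (Real.sqrt (1 - (α * Real.sin s) ^ 2) : ℝ) := by
  have h_pos := dispRadicand_ofReal_re_pos hα s
  rw [dispRadicand_ofReal, Complex.ofReal_re] at h_pos
  rw [dispRoot, dispRadicand_ofReal, Complex.sqrt_of_nonneg (by exact_mod_cast h_pos.le),
    Complex.ofReal_re]

lemma walkPhaseDeriv_ofReal (hα : |α| < 1) (s : ℝ) :
    walkPhaseDeriv α s =
      (α - α * Real.cos s / Real.sqrt (1 - (α * Real.sin s) ^ 2) : ℝ) := by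
  rw [walkPhaseDeriv, dispRoot_ofReal hα]
  push_cast
  rfl

lemma walkPhaseDeriv₂_ofReal_im (hα : |α| < 1) (s : ℝ) : (walkPhaseDeriv₂ α s).im = 0 := by
  rw [walkPhaseDeriv₂, dispRoot_ofReal hα, ← Complex.ofReal_sin]
  norm_cast

lemma walkPhase_ofReal_im (hα : |α| < 1) (s : ℝ) : (walkPhase α s).im = 0 := by
  have h_pos := dispRadicand_ofReal_re_pos hα s
  rw [dispRadicand_ofReal, Complex.ofReal_re] at h_pos
  have h_norm : ‖dispFactor α s‖ = 1 := by
    rw [← sq_eq_sq₀ (norm_nonneg _) zero_le_one, ← Complex.normSq_eq_norm_sq, dispFactor,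
      dispRoot_ofReal hα, ← Complex.ofReal_sin, ← Complex.ofReal_mul, Complex.normSq_apply]
    simp [← sq, Real.sq_sqrt h_pos.le, -Complex.ofReal_sin]
  simp [walkPhase, Complex.log_re, h_norm]

-- Concavity of the square root, applied to `1 - α² sin² s = (1 - α²) * 1 + α² * cos² s`.
lemma one_sub_le_sqrt_dispRadicand (hα : |α| < 1) (s : ℝ) :
    1 - α ^ 2 * (1 - Real.cos s) ≤ Real.sqrt (1 - (α * Real.sin s) ^ 2) := by
  refine Real.le_sqrt_of_sq_le ?_
  have hα_sq : α ^ 2 ≤ 1 := ((sq_lt_one_iff_abs_lt_one α).2 hα).le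
  have h_gap := mul_nonneg (mul_nonneg (sq_nonneg α) (sub_nonneg.2 hα_sq))
    (sq_nonneg (1 - Real.cos s))
  linear_combination h_gap + α ^ 2 * Real.sin_sq_add_cos_sq s

lemma le_walkPhaseDeriv_re (h₀ : 0 ≤ α) (h₁ : α < 1) {s : ℝ}
    (hs : s ∈ Set.Icc (-Real.pi) Real.pi) :
    2 * α * (1 - α ^ 2) / Real.pi ^ 2 * s ^ 2 ≤ (walkPhaseDeriv α s).re := by
  have hα : |α| < 1 := by rwa [abs_of_nonneg h₀]
  have h_sub : 0 ≤ 1 - α ^ 2 := sub_nonneg.2 (pow_le_one₀ h₀ h₁.le)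
  have h_pos := dispRadicand_ofReal_re_pos hα s
  rw [dispRadicand_ofReal, Complex.ofReal_re] at h_pos
  have h_root := one_sub_le_sqrt_dispRadicand hα s
  rw [walkPhaseDeriv_ofReal hα, Complex.ofReal_re]
  set S := Real.sqrt (1 - (α * Real.sin s) ^ 2)
  have hS : 0 < S := Real.sqrt_pos.2 h_pos
  have hS_le : S ≤ 1 := Real.sqrt_le_one.2 (by nlinarith [sq_nonneg (α * Real.sin s)])
  have h_jordan := Real.cos_le_one_sub_mul_cos_sq (abs_le.2 hs)
  have h_cos := Real.cos_le_one s
  calc 2 * α * (1 - α ^ 2) / Real.pi ^ 2 * s ^ 2 = α * (1 - α ^ 2) * (2 / Real.pi ^ 2 * s ^ 2) := by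
        ring
    _ ≤ α * (1 - α ^ 2) * (1 - Real.cos s) := by
        gcongr
        linarith
    _ ≤ α * (1 - α ^ 2) * (1 - Real.cos s) / S :=
        (le_div_iff₀ hS).2 (mul_le_of_le_one_right
          (mul_nonneg (mul_nonneg h₀ h_sub) (sub_nonneg.2 h_cos)) hS_le)
    _ ≤ α * (S - Real.cos s) / S := by
        rw [mul_assoc]
        gcongr
        linarith
    _ = α - α * Real.cos s / S := by
        field_simp

end RealAxis

section Strip

variable {α ρ : ℝ} {w : ℂ}

lemma walkPhase_sub_cubic_isBigO (α : ℝ) :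
    (fun w ↦ walkPhase α w - (α * (1 - α ^ 2) / 2 : ℝ) * w ^ 3 / 3) =O[𝓝 0] fun w ↦ w ^ 4 := by
  have h_zero : 0 < (dispRadicand α 0).re := by simp [dispRadicand]
  have h_domain : ∀ᶠ w in 𝓝 0, 0 < (dispRadicand α w).re :=
    (Complex.continuous_re.comp (continuous_dispRadicand α)).continuousAt.eventually_const_lt h_zero
  have h_root : dispRoot α 0 = 1 := by simp [dispRoot, dispRadicand]
  set c : ℂ := ((α * (1 - α ^ 2) / 2 : ℝ) : ℂ) with hc
  have h_third : (fun w ↦ walkPhaseDeriv₃ α w - 2 * c) =O[𝓝 0] fun w ↦ w ^ 1 := by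
    have h_value : walkPhaseDeriv₃ α 0 = 2 * c := by
      simp [walkPhaseDeriv₃, h_root, hc, mul_div_cancel₀]
    simpa [h_value] using (differentiableAt_walkPhaseDeriv₃ h_zero).isBigO_sub
  have h_second : (fun w ↦ walkPhaseDeriv₂ α w - 2 * c * w) =O[𝓝 0] fun w ↦ w ^ 2 := by
    refine isBigO_pow_succ_of_hasDerivAt (h_domain.mono fun w hw ↦ ?_)
      (by simp [walkPhaseDeriv₂]) h_third
    simpa using (hasDerivAt_walkPhaseDeriv₂ hw).fun_sub ((hasDerivAt_id' w).const_mul (2 * c))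
  have h_first : (fun w ↦ walkPhaseDeriv α w - c * w ^ 2) =O[𝓝 0] fun w ↦ w ^ 3 := by
    refine isBigO_pow_succ_of_hasDerivAt (h_domain.mono fun w hw ↦ ?_)
      (by simp [walkPhaseDeriv, h_root]) h_second
    refine ((hasDerivAt_walkPhaseDeriv hw).fun_sub
      ((hasDerivAt_pow 2 w).const_mul c)).congr_deriv ?_
    ring
  refine isBigO_pow_succ_of_hasDerivAt (h_domain.mono fun w hw ↦ ?_)
    (by simp [walkPhase, dispFactor, h_root]) h_first
  refine ((hasDerivAt_walkPhase hw).fun_sub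
    (((hasDerivAt_pow 3 w).const_mul c).div_const 3)).congr_deriv ?_
  ring

lemma exists_norm_walkPhaseDeriv₃_le (r : ℝ)
    (hρ : ∀ w : ℂ, w.im ∈ Set.Icc 0 ρ → 0 < (dispRadicand α w).re) :
    ∃ C, ∀ w ∈ Set.Icc (-r) r ×ℂ Set.Icc 0 ρ, ‖walkPhaseDeriv₃ α w‖ ≤ C :=
  (isCompact_box r ρ).exists_bound_of_continuousOn fun w hw ↦
    (differentiableAt_walkPhaseDeriv₃ (hρ w hw.2)).continuousAt.continuousWithinAt

lemma hasDerivAt_comp_add_mul_I {f : ℂ → ℂ} {f' : ℂ} {s v : ℝ}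
    (hf : HasDerivAt f f' (s + v * Complex.I)) :
    HasDerivAt (fun v : ℝ ↦ f (s + v * Complex.I)) (f' * Complex.I) v := by
  have h_line : HasDerivAt (fun v : ℝ ↦ (s + v * Complex.I : ℂ)) Complex.I v := by
    simpa using ((hasDerivAt_id' (v : ℂ)).comp_ofReal.mul_const Complex.I).const_add (s : ℂ)
  exact hf.comp v h_line

lemma walkPhase_taylor_two {C s v : ℝ} (hα : |α| < 1)
    (hρ : ∀ w : ℂ, w.im ∈ Set.Icc 0 ρ → 0 < (dispRadicand α w).re)
    (hC : ∀ u ∈ Set.Icc 0 ρ, ‖walkPhaseDeriv₃ α (s + u * Complex.I)‖ ≤ C)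
    (hv : v ∈ Set.Icc 0 ρ) :
    v * (walkPhaseDeriv α s).re - C * v ^ 3 ≤ (walkPhase α (s + v * Complex.I)).im := by
  have h_dom : ∀ u ∈ Set.Icc 0 ρ, 0 < (dispRadicand α (s + u * Complex.I)).re := fun u hu ↦
    hρ _ (by simpa using hu)
  have h_taylor := norm_sub_taylor_two_le
    (fun u hu ↦ hasDerivAt_comp_add_mul_I (hasDerivAt_walkPhase (h_dom u hu)))
    (fun u hu ↦ (hasDerivAt_comp_add_mul_I
      (hasDerivAt_walkPhaseDeriv (h_dom u hu))).mul_const Complex.I)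
    (fun u hu ↦ ((hasDerivAt_comp_add_mul_I
      (hasDerivAt_walkPhaseDeriv₂ (h_dom u hu))).mul_const Complex.I).mul_const Complex.I)
    (fun u hu ↦ by simpa using hC u hu) hv
  have h_im := (abs_le.1 ((Complex.abs_im_le_norm _).trans h_taylor)).1
  simp only [Complex.ofReal_zero, zero_mul, add_zero, Complex.sub_im, Complex.smul_im,
    Complex.mul_I_im, Complex.mul_I_re, walkPhase_ofReal_im hα, walkPhaseDeriv₂_ofReal_im hα,
    smul_eq_mul, neg_zero, mul_zero, sub_zero] at h_im
  linarith

theorem exists_isAiryPhase_walkPhase (h₀ : 0 < α) (h₁ : α < 1) :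
    ∃ ρ > 0, (∀ w : ℂ, w.im ∈ Set.Icc 0 ρ → 0 < (dispRadicand α w).re) ∧
      IsAiryPhase (walkPhase α) (α * (1 - α ^ 2) / 2) Real.pi ρ := by
  have hα : |α| < 1 := by rwa [abs_of_pos h₀]
  obtain ⟨ρ, hρ, h_dom⟩ := exists_strip_dispRadicand_re_pos hα
  obtain ⟨C, hC⟩ := exists_norm_walkPhaseDeriv₃_le Real.pi h_dom
  have h_sub : 0 < 1 - α ^ 2 := sub_pos.2 (pow_lt_one₀ h₀.le h₁ two_ne_zero)
  refine ⟨ρ, hρ, h_dom, fun w hw ↦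
    (hasDerivAt_walkPhase (h_dom w hw.2)).continuousAt.continuousWithinAt,
    walkPhase_sub_cubic_isBigO α, 2 * α * (1 - α ^ 2) / Real.pi ^ 2, by positivity, C,
    fun w hw ↦ ?_⟩
  have h_taylor := walkPhase_taylor_two hα h_dom
    (fun u hu ↦ hC (w.re + u * Complex.I) (by simpa [Complex.mem_reProdIm] using ⟨hw.1, hu⟩)) hw.2
  rw [Complex.re_add_im] at h_taylor
  have h_lower := mul_le_mul_of_nonneg_left (le_walkPhaseDeriv_re h₀.le h₁ hw.1) hw.2.1
  linarith

end Strip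

/-! ### Spectral representation of the walk -/

section Step

variable {a b z : ℂ}

/-- The matrix `P = [[a, 0], [-conj b, 0]]`. -/
def coinLeft (a b : ℂ) : ℂ × ℂ →L[ℂ] ℂ × ℂ :=
  (ContinuousLinearMap.fst ℂ ℂ ℂ).smulRight (a, -(starRingEnd ℂ) b)

/-- The matrix `Q = [[0, b], [0, conj a]]`. -/
def coinRight (a b : ℂ) : ℂ × ℂ →L[ℂ] ℂ × ℂ :=
  (ContinuousLinearMap.snd ℂ ℂ ℂ).smulRight (b, (starRingEnd ℂ) a)

/-- The symbol `A(z) = P z⁻¹ + Q z` of the walk. -/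
def walkSymbol (a b z : ℂ) : ℂ × ℂ →L[ℂ] ℂ × ℂ :=
  z⁻¹ • coinLeft a b + z • coinRight a b

/-- The plane wave `x ↦ z⁻ˣ v`, a generalized eigenfunction of translations. -/
def planeWave (z : ℂ) (v : ℂ × ℂ) : ℤ → ℂ × ℂ := fun x ↦ z ^ (-x) • v

lemma qwStep_apply (a b : ℂ) (f : ℤ → ℂ × ℂ) (x : ℤ) :
    qwStep a b f x = coinLeft a b (f (x + 1)) + coinRight a b (f (x - 1)) := by
  ext <;> simp [qwStep, coinLeft, coinRight, mul_comm]

lemma continuous_qwStep (a b : ℂ) : Continuous (qwStep a b) := by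
  unfold qwStep
  fun_prop

lemma qwStep_planeWave (hz : z ≠ 0) (v : ℂ × ℂ) :
    qwStep a b (planeWave z v) = planeWave z (walkSymbol a b z v) := by
  funext x
  have h_left : z ^ (-(x + 1)) = z ^ (-x) * z⁻¹ := by
    rw [neg_add, zpow_add₀ hz, zpow_neg_one]
  have h_right : z ^ (-(x - 1)) = z ^ (-x) * z := by
    rw [neg_sub, sub_eq_neg_add, zpow_add_one₀ hz]
  simp only [qwStep_apply, planeWave, walkSymbol, h_left, h_right, map_smul, mul_smul, smul_add,
    add_apply, smul_apply]

lemma qwStep_iterate_planeWave (hz : z ≠ 0) (n : ℕ) (v : ℂ × ℂ) :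
    (qwStep a b)^[n] (planeWave z v) = planeWave z ((walkSymbol a b z)^[n] v) :=
  (Function.Semiconj.iterate_right (fun v ↦ (qwStep_planeWave hz v).symm) n v).symm

lemma qwStep_iterate_intervalIntegral {f : ℝ → ℤ → ℂ × ℂ} (hf : Continuous f) (c : ℂ) (s t : ℝ)
    (n : ℕ) :
    (qwStep a b)^[n] (fun x ↦ c • ∫ r in s..t, f r x) =
      fun x ↦ c • ∫ r in s..t, (qwStep a b)^[n] (f r) x := by
  induction n with
  | zero => rfl
  | succ n ih =>
    have h_cont (x : ℤ) : Continuous fun r ↦ (qwStep a b)^[n] (f r) x :=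
      (continuous_apply x).comp (((continuous_qwStep a b).iterate n).comp hf)
    have h_int (x : ℤ) := (h_cont x).intervalIntegrable (μ := volume) s t
    have h_map (L : ℂ × ℂ →L[ℂ] ℂ × ℂ) (x : ℤ) :=
      (L.continuous.comp (h_cont x)).intervalIntegrable (μ := volume) s t
    funext x
    simp only [Function.iterate_succ_apply', ih, qwStep_apply, map_smul]
    rw [← smul_add, ← ContinuousLinearMap.intervalIntegral_comp_comm _ (h_int _),
      ← ContinuousLinearMap.intervalIntegral_comp_comm _ (h_int _)]
    exact congrArg (c • ·) (intervalIntegral.integral_add (h_map _ _) (h_map _ _)).symm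

lemma walkSymbol_neg (a b z : ℂ) (v : ℂ × ℂ) : walkSymbol a b (-z) v = -walkSymbol a b z v := by
  simp only [walkSymbol, add_apply, smul_apply, inv_neg, neg_smul, neg_add]

lemma mul_conj_eq_one_sub (hab : ‖a‖ ^ 2 + ‖b‖ ^ 2 = 1) :
    b * (starRingEnd ℂ) b = 1 - (‖a‖ : ℂ) ^ 2 := by
  rw [Complex.mul_conj']
  exact_mod_cast eq_sub_of_add_eq' hab

-- Cayley–Hamilton, since `det A(z) = 1`.
lemma walkSymbol_walkSymbol (hab : ‖a‖ ^ 2 + ‖b‖ ^ 2 = 1) (hz : z ≠ 0) (v : ℂ × ℂ) :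
    walkSymbol a b z (walkSymbol a b z v) =
      (a * z⁻¹ + (starRingEnd ℂ) a * z) • walkSymbol a b z v - v := by
  have h_det : a * (starRingEnd ℂ) a + b * (starRingEnd ℂ) b = 1 := by
    rw [mul_conj_eq_one_sub hab, Complex.mul_conj']
    ring
  have h_inv := mul_inv_cancel₀ hz
  ext
  · simp only [walkSymbol, coinLeft, coinRight, add_apply, smul_apply, Prod.fst_add, Prod.smul_fst,
      Prod.snd_add, Prod.smul_snd, Prod.fst_sub, ContinuousLinearMap.smulRight_apply,
      ContinuousLinearMap.coe_fst', ContinuousLinearMap.coe_snd', smul_eq_mul]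
    linear_combination -(v.1 * z * z⁻¹) * h_det - v.1 * h_inv
  · simp only [walkSymbol, coinLeft, coinRight, add_apply, smul_apply, Prod.fst_add, Prod.smul_fst,
      Prod.snd_add, Prod.smul_snd, Prod.snd_sub, ContinuousLinearMap.smulRight_apply,
      ContinuousLinearMap.coe_fst', ContinuousLinearMap.coe_snd', smul_eq_mul]
    linear_combination -(v.2 * z * z⁻¹) * h_det - v.2 * h_inv

lemma conj_mul_div_norm (a : ℂ) : (starRingEnd ℂ) a * (a / ‖a‖) = ‖a‖ := by
  rw [mul_div_assoc', Complex.conj_mul', sq, mul_self_div_self]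

lemma mul_inv_div_norm (a : ℂ) : a * (a / ‖a‖)⁻¹ = ‖a‖ := by
  rcases eq_or_ne a 0 with rfl | ha
  · simp
  · rw [inv_div, mul_div_cancel₀ _ ha]

end Step

section Band

variable {a b w : ℂ} {α ε : ℝ}

/-- The point `ωζ`, where `ζ = exp (iε(π/2 - w))` solves `ζ + ζ⁻¹ = 2 sin w`. In this coordinate the
critical point `ζ = εi` of the phase is `w = 0`. -/
def bandPoint (a : ℂ) (ε : ℝ) (w : ℂ) : ℂ :=
  a / ‖a‖ * Complex.exp (Complex.I * (ε * (Real.pi / 2 - w)))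

/-- The eigenvalue `λ(w) = α sin w + iS(w)` of the symbol; the other one is `-λ(w + π)`. -/
def walkEigenvalue (α : ℝ) (w : ℂ) : ℂ := α * Complex.sin w + Complex.I * dispRoot α w

/-- The component `E(w)φ` of `φ` in the eigenspace of `A(ωζ(w))` for the eigenvalue `λ(w)`. -/
def bandComponent (a b : ℂ) (ε : ℝ) (φ : ℂ × ℂ) (w : ℂ) : ℂ × ℂ :=
  (2 * Complex.I * dispRoot ‖a‖ w)⁻¹ •
    (walkSymbol a b (bandPoint a ε w) φ + walkEigenvalue ‖a‖ (w + Real.pi) • φ)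

lemma bandPoint_ne_zero (ha : a ≠ 0) (ε : ℝ) (w : ℂ) : bandPoint a ε w ≠ 0 :=
  mul_ne_zero (div_ne_zero ha (by simpa using ha)) (Complex.exp_ne_zero _)

lemma differentiable_bandPoint (a : ℂ) (ε : ℝ) : Differentiable ℂ (bandPoint a ε) := by
  unfold bandPoint
  fun_prop

lemma bandPoint_add_pi (a : ℂ) (hε : ε = 1 ∨ ε = -1) (w : ℂ) :
    bandPoint a ε (w + Real.pi) = -bandPoint a ε w := by
  have h_exp : Complex.exp (-(Complex.I * (ε * Real.pi))) = -1 := by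
    rcases hε with rfl | rfl <;> simp [mul_comm Complex.I, Complex.exp_neg]
  have h_arg : Complex.I * (ε * (Real.pi / 2 - (w + Real.pi))) =
      Complex.I * (ε * (Real.pi / 2 - w)) + -(Complex.I * (ε * Real.pi)) := by ring
  rw [bandPoint, h_arg, Complex.exp_add, h_exp, mul_neg_one, mul_neg, bandPoint]

lemma trace_walkSymbol_bandPoint (a : ℂ) (hε : ε = 1 ∨ ε = -1) (w : ℂ) :
    a * (bandPoint a ε w)⁻¹ + (starRingEnd ℂ) a * bandPoint a ε w =
      2 * (‖a‖ * Complex.sin w) := by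
  have h_sin : Complex.exp (Complex.I * (ε * (Real.pi / 2 - w))) +
      (Complex.exp (Complex.I * (ε * (Real.pi / 2 - w))))⁻¹ = 2 * Complex.sin w := by
    rw [← Complex.exp_neg, ← Complex.cos_pi_div_two_sub, Complex.two_cos]
    rcases hε with rfl | rfl
    · congr 2 <;> (push_cast; ring)
    · rw [add_comm]
      congr 2 <;> (push_cast; ring)
  rw [bandPoint, mul_inv, ← mul_assoc a, ← mul_assoc ((starRingEnd ℂ) a), mul_inv_div_norm,
    conj_mul_div_norm]
  linear_combination ‖a‖ * h_sin

lemma dispRoot_add_pi (α : ℝ) (w : ℂ) : dispRoot α (w + Real.pi) = dispRoot α w := by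
  simp only [dispRoot, dispRadicand, Complex.sin_add_pi, mul_neg, neg_sq]

lemma walkEigenvalue_add_pi (α : ℝ) (w : ℂ) :
    walkEigenvalue α (w + Real.pi) = -(α * Complex.sin w) + Complex.I * dispRoot α w := by
  rw [walkEigenvalue, dispRoot_add_pi, Complex.sin_add_pi, mul_neg]

lemma walkEigenvalue_mul_add_pi (α : ℝ) (w : ℂ) :
    walkEigenvalue α w * walkEigenvalue α (w + Real.pi) = -1 := by
  have h_sq := dispRoot_sq α w
  rw [dispRadicand] at h_sq
  rw [walkEigenvalue_add_pi, walkEigenvalue]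
  linear_combination dispRoot α w ^ 2 * Complex.I_sq - h_sq

lemma bandComponent_add_pi (b : ℂ) (hε : ε = 1 ∨ ε = -1) (φ : ℂ × ℂ)
    (hw : 0 < (dispRadicand ‖a‖ w).re) :
    bandComponent a b ε φ w + bandComponent a b ε φ (w + Real.pi) = φ := by
  have h_two : walkEigenvalue ‖a‖ (w + Real.pi) + walkEigenvalue ‖a‖ (w + Real.pi + Real.pi) =
      2 * Complex.I * dispRoot ‖a‖ w := by
    rw [walkEigenvalue_add_pi, walkEigenvalue_add_pi, dispRoot_add_pi, Complex.sin_add_pi]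
    ring
  have h_ne : 2 * Complex.I * dispRoot ‖a‖ w ≠ 0 :=
    mul_ne_zero (mul_ne_zero two_ne_zero Complex.I_ne_zero) (dispRoot_ne_zero hw)
  rw [bandComponent, bandComponent, dispRoot_add_pi, bandPoint_add_pi a hε, walkSymbol_neg,
    ← smul_add, inv_smul_eq_iff₀ h_ne, ← h_two, add_smul]
  abel

lemma walkSymbol_bandComponent (hab : ‖a‖ ^ 2 + ‖b‖ ^ 2 = 1) (ha : a ≠ 0) (hε : ε = 1 ∨ ε = -1)
    (φ : ℂ × ℂ) (w : ℂ) :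
    walkSymbol a b (bandPoint a ε w) (bandComponent a b ε φ w) =
      walkEigenvalue ‖a‖ w • bandComponent a b ε φ w := by
  have h_sum : 2 * (‖a‖ * Complex.sin w) =
      walkEigenvalue ‖a‖ w - walkEigenvalue ‖a‖ (w + Real.pi) := by
    rw [walkEigenvalue_add_pi, walkEigenvalue]
    ring
  rw [bandComponent, map_smul, smul_comm (walkEigenvalue ‖a‖ w), map_add, map_smul,
    walkSymbol_walkSymbol hab (bandPoint_ne_zero ha ε w), trace_walkSymbol_bandPoint a hε, h_sum,
    smul_add (walkEigenvalue ‖a‖ w), smul_smul (walkEigenvalue ‖a‖ w), walkEigenvalue_mul_add_pi]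
  module

lemma walkSymbol_bandComponent_add_pi (hab : ‖a‖ ^ 2 + ‖b‖ ^ 2 = 1) (ha : a ≠ 0)
    (hε : ε = 1 ∨ ε = -1) (φ : ℂ × ℂ) (w : ℂ) :
    walkSymbol a b (bandPoint a ε w) (bandComponent a b ε φ (w + Real.pi)) =
      -walkEigenvalue ‖a‖ (w + Real.pi) • bandComponent a b ε φ (w + Real.pi) := by
  rw [← neg_neg (bandPoint a ε w), ← bandPoint_add_pi a hε, walkSymbol_neg,
    walkSymbol_bandComponent hab ha hε, neg_smul]

lemma walkSymbol_iterate_of_eigenvector {μ z : ℂ} {v : ℂ × ℂ} (h : walkSymbol a b z v = μ • v)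
    (n : ℕ) : (walkSymbol a b z)^[n] v = μ ^ n • v := by
  induction n with
  | zero => simp
  | succ n ih => rw [Function.iterate_succ_apply', ih, map_smul, h, smul_smul, pow_succ]

/-- The contribution of the branch `λ` of the spectrum to `Uⁿ(planeWave (ωζ(w)) φ)` at `y`. -/
def bandWave (a b : ℂ) (ε : ℝ) (φ : ℂ × ℂ) (n : ℕ) (y : ℤ) (w : ℂ) : ℂ × ℂ :=
  (walkEigenvalue ‖a‖ w ^ n * bandPoint a ε w ^ (-y)) • bandComponent a b ε φ w

lemma qwStep_iterate_planeWave_bandPoint (hab : ‖a‖ ^ 2 + ‖b‖ ^ 2 = 1) (ha : a ≠ 0)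
    (hε : ε = 1 ∨ ε = -1) (φ : ℂ × ℂ) (hw : 0 < (dispRadicand ‖a‖ w).re) (n : ℕ) (y : ℤ) :
    (qwStep a b)^[n] (planeWave (bandPoint a ε w) φ) y =
      bandWave a b ε φ n y w +
        (-1 : ℂ) ^ ((n : ℤ) + y) • bandWave a b ε φ n y (w + Real.pi) := by
  have h_iterate : (walkSymbol a b (bandPoint a ε w))^[n] φ =
      walkEigenvalue ‖a‖ w ^ n • bandComponent a b ε φ w +
        (-walkEigenvalue ‖a‖ (w + Real.pi)) ^ n • bandComponent a b ε φ (w + Real.pi) := by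
    rw [← walkSymbol_iterate_of_eigenvector (walkSymbol_bandComponent hab ha hε φ w),
      ← walkSymbol_iterate_of_eigenvector (walkSymbol_bandComponent_add_pi hab ha hε φ w),
      ← iterate_map_add, bandComponent_add_pi b hε φ hw]
  have h_sign : bandPoint a ε w ^ (-y) = (-1 : ℂ) ^ y * bandPoint a ε (w + Real.pi) ^ (-y) := by
    rw [bandPoint_add_pi a hε, neg_eq_neg_one_mul (bandPoint a ε w), mul_zpow, ← mul_assoc,
      ← zpow_add₀ (by norm_num), add_neg_cancel, zpow_zero, one_mul]
  rw [qwStep_iterate_planeWave (bandPoint_ne_zero ha ε w), planeWave, h_iterate, smul_add,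
    smul_smul, smul_smul, bandWave, bandWave, smul_smul, mul_comm (bandPoint a ε w ^ (-y)), h_sign,
    neg_pow, zpow_add₀ (by norm_num), zpow_natCast]
  congr 2
  ring

end Band

section Representation

variable {a b w : ℂ} {ε β m : ℝ}

lemma airyLine_add (β m s t : ℝ) : airyLine β m (s + t) = airyLine β m s + t := by
  rw [airyLine, airyLine, Complex.ofReal_add]
  ring

lemma differentiableAt_walkEigenvalue {α : ℝ} (hw : 0 < (dispRadicand α w).re) :
    DifferentiableAt ℂ (walkEigenvalue α) w := by
  have h_root := (hasDerivAt_dispRoot hw).differentiableAt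
  unfold walkEigenvalue
  fun_prop

lemma differentiableAt_bandComponent (b : ℂ) (ha : a ≠ 0) (ε : ℝ) (φ : ℂ × ℂ)
    (hw : 0 < (dispRadicand ‖a‖ w).re) : DifferentiableAt ℂ (bandComponent a b ε φ) w := by
  have h_root := (hasDerivAt_dispRoot hw).differentiableAt
  have h_point := differentiable_bandPoint a ε w
  have h_inv := h_point.fun_inv (bandPoint_ne_zero ha ε w)
  have h_norm := (h_root.const_mul (2 * Complex.I)).fun_inv
    (mul_ne_zero (mul_ne_zero two_ne_zero Complex.I_ne_zero) (dispRoot_ne_zero hw))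
  unfold bandComponent
  simp only [walkSymbol, add_apply, smul_apply, walkEigenvalue_add_pi]
  fun_prop

lemma differentiableAt_bandWave (b : ℂ) (ha : a ≠ 0) (ε : ℝ) (φ : ℂ × ℂ) (n : ℕ) (y : ℤ)
    (hw : 0 < (dispRadicand ‖a‖ w).re) : DifferentiableAt ℂ (bandWave a b ε φ n y) w :=
  (((differentiableAt_walkEigenvalue hw).fun_pow n).fun_mul ((differentiable_bandPoint a ε w).zpow
    (Or.inl (bandPoint_ne_zero ha ε w)))).fun_smul (differentiableAt_bandComponent b ha ε φ hw)

lemma continuous_bandWave_airyLine (b : ℂ) (ha : a ≠ 0) (ε : ℝ) (φ : ℂ × ℂ)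
    (h_dom : ∀ s, 0 < (dispRadicand ‖a‖ (airyLine β m s)).re) (n : ℕ) (y : ℤ) :
    Continuous fun s ↦ bandWave a b ε φ n y (airyLine β m s) :=
  continuous_iff_continuousAt.2 fun s ↦
    (differentiableAt_bandWave b ha ε φ n y (h_dom s)).continuousAt.comp
      (continuous_airyLine β m).continuousAt

lemma bandWave_airyLine_periodic (b : ℂ) (hε : ε = 1 ∨ ε = -1) (φ : ℂ × ℂ) (n : ℕ) (y : ℤ) :
    Function.Periodic (fun s ↦ bandWave a b ε φ n y (airyLine β m s)) (2 * Real.pi) := fun s ↦ by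
  simp only [two_mul, ← add_assoc, airyLine_add, bandWave, bandComponent, bandPoint_add_pi a hε,
    dispRoot_add_pi, walkEigenvalue, Complex.sin_add_pi, neg_neg, mul_neg]

lemma integral_bandPoint_airyLine_zpow (a : ℂ) (hε : ε = 1 ∨ ε = -1) (β m : ℝ) {y : ℤ}
    (hy : y ≠ 0) : ∫ s in (-Real.pi)..Real.pi, bandPoint a ε (airyLine β m s) ^ (-y) = 0 := by
  set c : ℂ := Complex.I * ε * y with hc
  have h_ne : c ≠ 0 := by
    rcases hε with rfl | rfl <;> simpa [hc] using hy
  have h_wave (s : ℝ) : bandPoint a ε (airyLine β m s) ^ (-y) =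
      bandPoint a ε (airyLine β m 0) ^ (-y) * Complex.exp (c * s) := by
    rw [bandPoint, bandPoint, mul_zpow, mul_zpow, ← Complex.exp_int_mul, ← Complex.exp_int_mul,
      mul_assoc, ← Complex.exp_add, airyLine, airyLine, hc]
    congr 2
    push_cast
    ring
  have h_period : Complex.exp (c * Real.pi) = Complex.exp (c * (-Real.pi : ℝ)) := by
    rw [Complex.exp_eq_exp_iff_exists_int, hc]
    rcases hε with rfl | rfl
    · exact ⟨y, by push_cast; ring⟩
    · exact ⟨-y, by push_cast; ring⟩
  rw [intervalIntegral.integral_congr fun s _ ↦ h_wave s, intervalIntegral.integral_const_mul,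
    integral_exp_mul_complex h_ne, h_period, sub_self,
    zero_div, mul_zero]

lemma qwDelta_eq_integral_planeWave (a : ℂ) (hε : ε = 1 ∨ ε = -1) (β m : ℝ) (φ : ℂ × ℂ) :
    qwDelta φ = fun x ↦ (2 * Real.pi : ℂ)⁻¹ •
      ∫ s in (-Real.pi)..Real.pi, planeWave (bandPoint a ε (airyLine β m s)) φ x := by
  funext x
  simp only [planeWave, intervalIntegral.integral_smul_const]
  rcases eq_or_ne x 0 with rfl | hx
  · have h_pi : (2 * Real.pi : ℂ) ≠ 0 := by simp [Real.pi_ne_zero]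
    simp only [qwDelta, if_true, neg_zero, zpow_zero, intervalIntegral.integral_const,
      sub_neg_eq_add, ← two_mul, smul_smul, Complex.real_smul, mul_one]
    push_cast
    rw [inv_mul_cancel₀ h_pi, one_smul]
  · rw [integral_bandPoint_airyLine_zpow a hε β m hx, qwDelta, if_neg hx, zero_smul, smul_zero]

lemma integral_bandWave_add_pi (b : ℂ) (hε : ε = 1 ∨ ε = -1) (φ : ℂ × ℂ) (n : ℕ) (y : ℤ) :
    ∫ s in (-Real.pi)..Real.pi, bandWave a b ε φ n y (airyLine β m s + Real.pi) =
      ∫ s in (-Real.pi)..Real.pi, bandWave a b ε φ n y (airyLine β m s) := by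
  simp_rw [← airyLine_add]
  rw [intervalIntegral.integral_comp_add_right (fun s ↦ bandWave a b ε φ n y (airyLine β m s))]
  convert (bandWave_airyLine_periodic b hε φ n y).intervalIntegral_add_eq
    (-Real.pi + Real.pi) (-Real.pi) using 2 <;> ring

theorem qwStep_iterate_qwDelta (hab : ‖a‖ ^ 2 + ‖b‖ ^ 2 = 1) (ha : a ≠ 0) (hε : ε = 1 ∨ ε = -1)
    (φ : ℂ × ℂ) (h_dom : ∀ s, 0 < (dispRadicand ‖a‖ (airyLine β m s)).re) (n : ℕ) (y : ℤ) :
    (qwStep a b)^[n] (qwDelta φ) y = ((1 + (-1 : ℂ) ^ ((n : ℤ) + y)) * (2 * Real.pi : ℂ)⁻¹) •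
      ∫ s in (-Real.pi)..Real.pi, bandWave a b ε φ n y (airyLine β m s) := by
  have h_wave : Continuous fun s ↦ planeWave (bandPoint a ε (airyLine β m s)) φ :=
    continuous_pi fun x ↦ (((differentiable_bandPoint a ε).continuous.comp
      (continuous_airyLine β m)).zpow₀ _ fun s ↦ Or.inl (bandPoint_ne_zero ha ε _)).smul
        continuous_const
  have h_cont := continuous_bandWave_airyLine b ha ε φ h_dom n y
  have h_cont_shift : Continuous fun s ↦ bandWave a b ε φ n y (airyLine β m s + Real.pi) := by
    simpa only [Function.comp_def, airyLine_add] using h_cont.comp (continuous_add_const Real.pi)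
  rw [qwDelta_eq_integral_planeWave a hε β m φ, qwStep_iterate_intervalIntegral h_wave]
  simp only [qwStep_iterate_planeWave_bandPoint hab ha hε φ (h_dom _)]
  rw [intervalIntegral.integral_add (h_cont.intervalIntegrable _ _)
      ((h_cont_shift.fun_const_smul _).intervalIntegrable _ _),
    intervalIntegral.integral_smul, integral_bandWave_add_pi b hε]
  module

end Representation

/-! ### The critical point -/

section CriticalPoint

variable {a b : ℂ} {ε : ℝ}

lemma conj_div_norm (a : ℂ) : (starRingEnd ℂ) (a / ‖a‖) = (a / ‖a‖)⁻¹ := by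
  rw [map_div₀, Complex.conj_ofReal, Complex.inv_def, Complex.normSq_eq_norm_sq]
  rcases eq_or_ne a 0 with rfl | ha
  · simp
  · simp [ha]

lemma bandPoint_zero (a : ℂ) (hε : ε = 1 ∨ ε = -1) :
    bandPoint a ε 0 = a / ‖a‖ * (ε * Complex.I) := by
  have h_arg : Complex.I * (ε * (Real.pi / 2 - 0)) = ε * (Real.pi / 2 * Complex.I) := by ring
  rw [bandPoint, h_arg]
  rcases hε with rfl | rfl <;> simp [Complex.exp_neg, Complex.exp_pi_div_two_mul_I]

lemma bandComponent_zero (a b : ℂ) (hε : ε = 1 ∨ ε = -1) (φ : ℂ × ℂ) :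
    bandComponent a b ε φ 0 =
      (2⁻¹ * ((1 - ε * ‖a‖) * φ.1 + ε * (a / ‖a‖) * b * φ.2),
        2⁻¹ * (ε * (a / ‖a‖)⁻¹ * (starRingEnd ℂ) b * φ.1 + (1 + ε * ‖a‖) * φ.2)) := by
  have h_root : dispRoot ‖a‖ 0 = 1 := by simp [dispRoot, dispRadicand]
  have h_inv : (bandPoint a ε 0)⁻¹ = (a / ‖a‖)⁻¹ * -(ε * Complex.I) := by
    rw [bandPoint_zero a hε, mul_inv, mul_inv, Complex.inv_I]
    rcases hε with rfl | rfl <;> simp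
  have h_half : (2 * Complex.I)⁻¹ * Complex.I = 2⁻¹ := by
    rw [mul_inv, mul_assoc, inv_mul_cancel₀ Complex.I_ne_zero, mul_one]
  rw [bandComponent, walkEigenvalue_add_pi, h_root, walkSymbol, h_inv, bandPoint_zero a hε]
  ext
  · simp only [coinLeft, coinRight, add_apply, smul_apply, Prod.fst_add, Prod.smul_fst,
      ContinuousLinearMap.smulRight_apply, ContinuousLinearMap.coe_fst',
      ContinuousLinearMap.coe_snd', smul_eq_mul, Complex.sin_zero, mul_zero, neg_zero, mul_one]
    linear_combination ((1 - ε * ‖a‖) * φ.1 + ε * (a / ‖a‖) * b * φ.2) * h_half -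
      (2 * Complex.I)⁻¹ * Complex.I * ε * φ.1 * mul_inv_div_norm a
  · simp only [coinLeft, coinRight, add_apply, smul_apply, Prod.snd_add, Prod.smul_snd,
      ContinuousLinearMap.smulRight_apply, ContinuousLinearMap.coe_fst',
      ContinuousLinearMap.coe_snd', smul_eq_mul, Complex.sin_zero, mul_zero, neg_zero, mul_one]
    linear_combination (ε * (a / ‖a‖)⁻¹ * (starRingEnd ℂ) b * φ.1 + (1 + ε * ‖a‖) * φ.2) * h_half +
      (2 * Complex.I)⁻¹ * Complex.I * ε * φ.2 * conj_mul_div_norm a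

lemma lamS_mul_I (a : ℂ) (ε : ℝ) : lamS a (ε * Complex.I) = Complex.I := by
  have h_phit : phit (ε * Complex.I) = 0 := by simp [phit]
  simp [lamS, h_phit]

lemma lamS_mul_I_sub (a : ℂ) (ε : ℝ) :
    lamS a (ε * Complex.I) - ‖a‖ * (starRingEnd ℂ) (ε * Complex.I) =
      Complex.I * (1 + ε * ‖a‖ : ℝ) := by
  rw [lamS_mul_I, map_mul, Complex.conj_I, Complex.conj_ofReal]
  push_cast
  ring

lemma pnormF_mul_I_sq (hab : ‖a‖ ^ 2 + ‖b‖ ^ 2 = 1) (hε : ε = 1 ∨ ε = -1) :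
    pnormF a b (ε * Complex.I) ^ 2 = 2 * (1 + ε * ‖a‖) := by
  rw [pnormF, Real.sq_sqrt (by positivity), lamS_mul_I_sub, norm_mul, Complex.norm_I, one_mul,
    Complex.norm_real, Real.norm_eq_abs, sq_abs]
  rcases hε with rfl | rfl <;> linear_combination hab

lemma bandComponent_zero_eq_innC_smul (hab : ‖a‖ ^ 2 + ‖b‖ ^ 2 = 1) (h₀ : 0 < ‖a‖) (h₁ : ‖a‖ < 1)
    (hε : ε = 1 ∨ ε = -1) (φ : ℂ × ℂ) :
    bandComponent a b ε φ 0 =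
      innC φ (uvec a b (ε * Complex.I)) • uvec a b (ε * Complex.I) := by
  have h_sign : (ε : ℂ) ^ 2 = 1 := by rcases hε with rfl | rfl <;> norm_num
  have h_pos : 0 < 1 + ε * ‖a‖ := by rcases hε with rfl | rfl <;> linarith
  have h_pnorm : ((pnormF a b (ε * Complex.I) : ℂ)⁻¹) ^ 2 * (2 * (1 + ε * ‖a‖)) = 1 := by
    have h_ne : (2 * (1 + ε * ‖a‖) : ℝ) ≠ 0 := (mul_pos two_pos h_pos).ne'
    rw [inv_pow, ← Complex.ofReal_pow, pnormF_mul_I_sq hab hε]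
    exact_mod_cast inv_mul_cancel₀ h_ne
  have h_phase : a / ‖a‖ * (a / ‖a‖)⁻¹ = 1 :=
    mul_inv_cancel₀ (div_ne_zero (norm_pos_iff.1 h₀) (by exact_mod_cast h₀.ne'))
  have h_conj := mul_conj_eq_one_sub hab
  rw [bandComponent_zero a b hε, uvec, lamS_mul_I_sub, mul_div_right_comm a b]
  simp only [innC, map_mul, map_inv₀, Complex.conj_ofReal, Complex.conj_I, conj_div_norm,
    Prod.smul_mk, smul_eq_mul]
  push_cast
  generalize (pnormF a b (ε * Complex.I) : ℂ)⁻¹ = p at *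
  generalize (a / (‖a‖ : ℂ))⁻¹ = ω' at *
  generalize a / (‖a‖ : ℂ) = ω at *
  generalize (‖a‖ : ℂ) = α at *
  generalize (ε : ℂ) = e at *
  generalize (starRingEnd ℂ) b = b' at *
  ext
  · simp only
    linear_combination -φ.1 * (p ^ 2 * e ^ 2 * ω * ω' * h_conj +
      p ^ 2 * e ^ 2 * (1 - α ^ 2) * h_phase + p ^ 2 * h_sign + (1 - e * α) / 2 * h_pnorm) -
      φ.2 * e * ω * b / 2 * h_pnorm +
      p ^ 2 * (φ.1 * ω' * b' * e + φ.2 * (1 + e * α)) * (ω * b * e) * Complex.I_sq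
  · simp only
    linear_combination -φ.1 * e * ω' * b' / 2 * h_pnorm - φ.2 * (1 + e * α) / 2 * h_pnorm +
      p ^ 2 * (φ.1 * ω' * b' * e + φ.2 * (1 + e * α)) * (1 + e * α) * Complex.I_sq

end CriticalPoint

section Amplitude

variable {a b w : ℂ} {ε β m : ℝ} {n : ℕ}

lemma walkEigenvalue_eq_exp (α : ℝ) (w : ℂ) :
    walkEigenvalue α w = Complex.exp (Complex.I * (Real.pi / 2 + walkPhase α w - α * w)) := by
  have h_arg : Complex.I * (Real.pi / 2 + walkPhase α w - α * w) =
      Real.pi / 2 * Complex.I + (Complex.I * walkPhase α w - Complex.I * (α * w)) := by ring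
  rw [h_arg, Complex.exp_add, Complex.exp_pi_div_two_mul_I, Complex.exp_sub, exp_walkPhase,
    mul_div_cancel_left₀ _ (Complex.exp_ne_zero _), walkEigenvalue, dispFactor]
  linear_combination α * Complex.sin w * Complex.I_sq

lemma walkEigenvalue_pow_mul_bandPoint_zpow (a : ℂ) (ε : ℝ) (hm : m ^ 3 = n) (y : ℤ) (w : ℂ) :
    walkEigenvalue ‖a‖ w ^ n * bandPoint a ε w ^ (-y) =
      (a / ‖a‖) ^ (-y) * Complex.exp (Complex.I * Real.pi * ((n - ε * y) / 2 : ℝ)) *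
        phaseExp (walkPhase ‖a‖) m (ε * y - n * ‖a‖) w := by
  have hm' : (m : ℂ) ^ 3 = n := by exact_mod_cast hm
  rw [walkEigenvalue_eq_exp, bandPoint, mul_zpow, mul_left_comm, phaseExp, hm', mul_assoc,
    ← Complex.exp_nat_mul, ← Complex.exp_int_mul, ← Complex.exp_add, ← Complex.exp_add]
  congr 2
  push_cast
  ring

/-- The functional `⟨·, ψ⟩`, linear since `innC` is conjugate-linear in its second argument. -/
def innCLM (ψ : ℂ × ℂ) : ℂ × ℂ →L[ℂ] ℂ :=
  (starRingEnd ℂ) ψ.1 • ContinuousLinearMap.fst ℂ ℂ ℂ +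
    (starRingEnd ℂ) ψ.2 • ContinuousLinearMap.snd ℂ ℂ ℂ

lemma innCLM_apply (ψ u : ℂ × ℂ) : innCLM ψ u = innC u ψ := by
  simp [innCLM, innC, mul_comm]

lemma innCLM_bandComponent_zero (hab : ‖a‖ ^ 2 + ‖b‖ ^ 2 = 1) (h₀ : 0 < ‖a‖) (h₁ : ‖a‖ < 1)
    (hε : ε = 1 ∨ ε = -1) (φ ψ : ℂ × ℂ) :
    innCLM ψ (bandComponent a b ε φ 0) = fpsi a b φ ψ (ε * Complex.I) := by
  rw [bandComponent_zero_eq_innC_smul hab h₀ h₁ hε, map_smul, innCLM_apply, smul_eq_mul, fpsi]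

/-- The factor `ω⁻ʸ e^{iπ(n - εy)/2} (1 + (-1)^{n + y})` of the amplitude at `y` at time `n`. -/
def wallPrefactor (a : ℂ) (ε : ℝ) (n : ℕ) (y : ℤ) : ℂ :=
  (a / ‖a‖) ^ (-y) * Complex.exp (Complex.I * Real.pi * ((n - ε * y) / 2 : ℝ)) *
    (1 + (-1 : ℂ) ^ ((n : ℤ) + y))

lemma norm_wallPrefactor_le (ha : a ≠ 0) (ε : ℝ) (n : ℕ) (y : ℤ) :
    ‖wallPrefactor a ε n y‖ ≤ 2 := by
  have h_phase : ‖a / (‖a‖ : ℂ)‖ = 1 := by simp [ha]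
  have h_exp : ‖Complex.exp (Complex.I * Real.pi * ((n - ε * y) / 2 : ℝ))‖ = 1 := by
    rw [mul_assoc, ← Complex.ofReal_mul, Complex.norm_exp_I_mul_ofReal]
  have h_sign : ‖1 + (-1 : ℂ) ^ ((n : ℤ) + y)‖ ≤ 2 :=
    (norm_add_le _ _).trans_eq (by norm_num)
  rwa [wallPrefactor, norm_mul, norm_mul, norm_zpow, h_phase, one_zpow, h_exp, one_mul, one_mul]

lemma innC_qwStep_iterate_qwDelta (hab : ‖a‖ ^ 2 + ‖b‖ ^ 2 = 1) (ha : a ≠ 0)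
    (hε : ε = 1 ∨ ε = -1) (φ ψ : ℂ × ℂ)
    (h_dom : ∀ s, 0 < (dispRadicand ‖a‖ (airyLine β m s)).re) (hm : m ^ 3 = n) (y : ℤ) :
    innC ((qwStep a b)^[n] (qwDelta φ) y) ψ = wallPrefactor a ε n y * ((2 * Real.pi : ℂ)⁻¹ *
      ∫ s in (-Real.pi)..Real.pi, innCLM ψ (bandComponent a b ε φ (airyLine β m s)) *
        phaseExp (walkPhase ‖a‖) m (ε * y - n * ‖a‖) (airyLine β m s)) := by
  have h_cont := continuous_bandWave_airyLine b ha ε φ h_dom n y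
  have h_wave (s : ℝ) : innCLM ψ (bandWave a b ε φ n y (airyLine β m s)) =
      (a / ‖a‖) ^ (-y) * Complex.exp (Complex.I * Real.pi * ((n - ε * y) / 2 : ℝ)) *
        (innCLM ψ (bandComponent a b ε φ (airyLine β m s)) *
          phaseExp (walkPhase ‖a‖) m (ε * y - n * ‖a‖) (airyLine β m s)) := by
    rw [bandWave, map_smul, walkEigenvalue_pow_mul_bandPoint_zpow a ε hm, smul_eq_mul]
    ring
  rw [← innCLM_apply, qwStep_iterate_qwDelta hab ha hε φ h_dom, map_smul,
    ← ContinuousLinearMap.intervalIntegral_comp_comm _ (h_cont.intervalIntegrable _ _),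
    intervalIntegral.integral_congr fun s _ ↦ h_wave s, intervalIntegral.integral_const_mul,
    smul_eq_mul, wallPrefactor]
  ring

lemma innC_qwStep_iterate_qwDelta_sub_Ai_isBigO {ι : Type*} {l : Filter ι} {N : ι → ℕ}
    {m : ι → ℝ} {y : ι → ℤ} (hab : ‖a‖ ^ 2 + ‖b‖ ^ 2 = 1) (h₀ : 0 < ‖a‖) (h₁ : ‖a‖ < 1)
    (hε : ε = 1 ∨ ε = -1) (hβ : 0 < β) (hβ_cube : ‖a‖ * (1 - ‖a‖ ^ 2) / 2 * β ^ 3 = 1)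
    (hm : Tendsto m l atTop) (hmN : ∀ i, m i ^ 3 = N i)
    (hy : (fun i ↦ ε * y i - N i * ‖a‖) =O[l] m) (φ ψ : ℂ × ℂ) :
    (fun i ↦ innC ((qwStep a b)^[N i] (qwDelta φ) (y i)) ψ - wallPrefactor a ε (N i) (y i) *
        (fpsi a b φ ψ (ε * Complex.I) * ((β / m i) * Ai (β / m i * (ε * y i - N i * ‖a‖)))))
      =O[l] fun i ↦ (m i ^ 2)⁻¹ := by
  have ha : a ≠ 0 := norm_pos_iff.1 h₀
  obtain ⟨ρ, hρ, h_dom, h_phase⟩ := exists_isAiryPhase_walkPhase h₀ h₁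
  have h_diff (w : ℂ) (hw : w.im ∈ Set.Icc 0 ρ) :
      DifferentiableAt ℂ (fun w ↦ innCLM ψ (bandComponent a b ε φ w)) w :=
    (innCLM ψ).differentiableAt.comp w (differentiableAt_bandComponent b ha ε φ (h_dom w hw))
  have h_airy := h_phase.intervalIntegral_sub_Ai_isBigO Real.pi_pos hρ hβ hβ_cube
    (fun w hw ↦ (h_diff w hw.2).continuousAt.continuousWithinAt)
    (by simpa using (h_diff 0 (by simpa using hρ.le)).isBigO_sub) hm hy
  have h_bound : (fun i ↦ wallPrefactor a ε (N i) (y i) * (2 * Real.pi : ℂ)⁻¹) =O[l]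
      fun _ ↦ (1 : ℝ) := by
    refine IsBigO.of_bound (2 * ‖(2 * Real.pi : ℂ)⁻¹‖) (.of_forall fun i ↦ ?_)
    rw [norm_mul, norm_one, mul_one]
    exact mul_le_mul_of_nonneg_right (norm_wallPrefactor_le ha ε _ _) (norm_nonneg _)
  refine (h_bound.mul h_airy).congr' ?_ (.of_forall fun i ↦ one_mul _)
  have h_line : ∀ᶠ i in l, β / m i ≤ ρ := (hm.const_div_atTop β).eventually_le_const hρ
  filter_upwards [h_line, hm.eventually_ge_atTop 0] with i hiρ hi
  have h_strip (s : ℝ) : 0 < (dispRadicand ‖a‖ (airyLine β (m i) s)).re :=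
    h_dom _ (by rw [airyLine_im]; exact ⟨by positivity, hiρ⟩)
  have h_pi : (2 * Real.pi : ℂ) ≠ 0 := by simp [Real.pi_ne_zero]
  rw [innC_qwStep_iterate_qwDelta hab ha hε φ ψ h_strip (hmN i),
    ← innCLM_bandComponent_zero hab h₀ h₁ hε]
  linear_combination -wallPrefactor a ε (N i) (y i) * innCLM ψ (bandComponent a b ε φ 0) *
    (β / m i * Ai (β / m i * (ε * y i - N i * ‖a‖))) * inv_mul_cancel₀ h_pi

end Amplitude

lemma rpow_one_third_pow_three {x : ℝ} (hx : 0 ≤ x) : (x ^ ((1 : ℝ) / 3)) ^ 3 = x := by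
  rw [← Real.rpow_mul_natCast hx]
  norm_num

lemma rpow_neg_one_third {x : ℝ} (hx : 0 ≤ x) :
    x ^ (-(1 : ℝ) / 3) = (x ^ ((1 : ℝ) / 3))⁻¹ := by
  rw [neg_div, Real.rpow_neg hx]

lemma rpow_neg_two_thirds {x : ℝ} (hx : 0 ≤ x) :
    x ^ (-(2 : ℝ) / 3) = ((x ^ ((1 : ℝ) / 3)) ^ 2)⁻¹ := by
  rw [neg_div, Real.rpow_neg hx, ← Real.rpow_mul_natCast hx]
  norm_num

theorem stmt13_general {ι : Type*} {l : Filter ι} {N : ι → ℕ} (hN : Tendsto N l atTop) {a b : ℂ}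
    (hab1 : ‖a‖ ^ 2 + ‖b‖ ^ 2 = 1) (hab : a * b ≠ 0) (φ ψ : ℂ × ℂ) {ε : ℝ} (hε : ε = 1 ∨ ε = -1)
    {y : ι → ℤ} {d : ι → ℝ} (hy : ∀ i, (y i : ℝ) = ε * N i * ‖a‖ + d i)
    (hd : d =O[l] fun i ↦ (N i : ℝ) ^ ((1 : ℝ) / 3)) :
    (fun i ↦ innC ((qwStep a b)^[N i] (qwDelta φ) (y i)) ψ -
        (a / ‖a‖) ^ (-(y i)) *
          Complex.exp (Complex.I * Real.pi * ((N i - ε * y i) / 2 : ℝ)) *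
          (1 + (-1 : ℂ) ^ ((N i : ℤ) + y i)) * fpsi a b φ ψ (ε * Complex.I) *
          ((2 / (‖a‖ * ‖b‖ ^ 2)) ^ ((1 : ℝ) / 3) : ℝ) * ((N i : ℝ) ^ (-(1 : ℝ) / 3) : ℝ) *
          Ai (ε * (2 / (‖a‖ * ‖b‖ ^ 2)) ^ ((1 : ℝ) / 3) * (N i : ℝ) ^ (-(1 : ℝ) / 3) * d i))
      =O[l] fun i ↦ (N i : ℝ) ^ (-(2 : ℝ) / 3) := by
  have h₀ : 0 < ‖a‖ := norm_pos_iff.2 (left_ne_zero_of_mul hab)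
  have hb : 0 < ‖b‖ := norm_pos_iff.2 (right_ne_zero_of_mul hab)
  have h₁ : ‖a‖ < 1 := by nlinarith [pow_pos hb 2]
  set β := (2 / (‖a‖ * ‖b‖ ^ 2)) ^ ((1 : ℝ) / 3)
  have hβ : 0 < β := by positivity
  have hβ_cube : ‖a‖ * (1 - ‖a‖ ^ 2) / 2 * β ^ 3 = 1 := by
    rw [rpow_one_third_pow_three (by positivity), ← eq_sub_of_add_eq' hab1]
    field_simp
  have hm : Tendsto (fun i ↦ (N i : ℝ) ^ ((1 : ℝ) / 3)) l atTop :=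
    (tendsto_rpow_atTop (by norm_num)).comp (tendsto_natCast_atTop_atTop.comp hN)
  have h_shift (i : ι) : ε * y i - N i * ‖a‖ = ε * d i := by
    rw [hy]
    rcases hε with rfl | rfl <;> ring
  have h_main := innC_qwStep_iterate_qwDelta_sub_Ai_isBigO (y := y) hab1 h₀ h₁ hε hβ hβ_cube hm
    (fun i ↦ rpow_one_third_pow_three (Nat.cast_nonneg _))
    (by simpa only [h_shift] using hd.const_mul_left ε) φ ψ
  simp only [rpow_neg_one_third (Nat.cast_nonneg _), rpow_neg_two_thirds (Nat.cast_nonneg _)]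
  refine h_main.congr_left fun i ↦ ?_
  set m := (N i : ℝ) ^ ((1 : ℝ) / 3)
  have h_arg : β / m * (ε * d i) = ε * β * m⁻¹ * d i := by ring
  rw [wallPrefactor, h_shift, h_arg]
  push_cast
  ring

/-- Proposition `amp2wall`: Airy asymptotics of the transition amplitude
around the wall `y_n = ε n|a| + d_n`, `d_n = O(n^{1/3})`, `ε = ±1`:
`⟨Uⁿ(δ₀⊗φ), δ_{y_n}⊗ψ⟩ = ω^{−y_n} e^{iπ(n−εy_n)/2}(1+(−1)^{n+y_n}) f_ψ(εi) α₀ n^{−1/3}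
Ai(ε α₀ n^{−1/3} d_n) + O(n^{−2/3})` with `α₀ = (2/(|a||b|²))^{1/3}`. -/
theorem stmt13 (a b : ℂ) (hab1 : ‖a‖ ^ 2 + ‖b‖ ^ 2 = 1) (hab : a * b ≠ 0)
    (φ : ℂ × ℂ) (hφ : nsq φ = 1) (ε : ℝ) (hε : ε = 1 ∨ ε = -1)
    (y : ℕ → ℤ) (d : ℕ → ℝ)
    (hy : ∀ n : ℕ, (y n : ℝ) = ε * (n : ℝ) * ‖a‖ + d n)
    (hd : d =O[atTop] fun n : ℕ => (n : ℝ) ^ ((1 : ℝ) / 3))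
    (ψ : ℂ × ℂ) (hψ : nsq ψ = 1) :
    (fun n : ℕ => innC (((qwStep a b)^[n] (qwDelta φ)) (y n)) ψ -
        (a / (‖a‖ : ℂ)) ^ (-(y n)) *
          Complex.exp (Complex.I * (Real.pi : ℂ) * ((((n : ℝ) - ε * (y n : ℝ)) / 2 : ℝ) : ℂ)) *
          (1 + (-1 : ℂ) ^ ((n : ℤ) + y n)) *
          fpsi a b φ ψ ((ε : ℂ) * Complex.I) *
          (((2 / (‖a‖ * ‖b‖ ^ 2)) ^ ((1 : ℝ) / 3) : ℝ) : ℂ) *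
          (((n : ℝ) ^ (-(1 : ℝ) / 3) : ℝ) : ℂ) *
          Ai (ε * (2 / (‖a‖ * ‖b‖ ^ 2)) ^ ((1 : ℝ) / 3) * (n : ℝ) ^ (-(1 : ℝ) / 3) * d n))
      =O[atTop] (fun n : ℕ => (n : ℝ) ^ (-(2 : ℝ) / 3)) := by
  exact stmt13_general tendsto_id hab1 hab φ ψ hε hy hd
end
end
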